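/- arXiv:1512.05098 — 11 statements merged into one kernel-verified Lean document; each statement's English description precedes it below -/
import Mathlib

section
/- Let P be a polynomial over ℂ with deg P = d ≥ 2. Then the polynomials X·P′ − P and P′ (the numerator and denominator of the Newton map N_P(z) = (z·P′(z) − P(z))/P′(z)) are coprime in ℂ[X] if and only if P has exactly d distinct complex roots (equivalently, if and only if P is squarefree). This expresses that the Newton map N_P has degree d exactly when P has d distinct roots. -/
open Polynomial

/-- For a polynomial `P` over `ℂ` with `deg P = d ≥ 2`, the numerator `X·P' - P` and the
denominator `P'` of the Newton map `N_P(z) = (z·P'(z) - P(z))/P'(z)` are coprime in `ℂ[X]`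
if and only if `P` has exactly `d` distinct complex roots. -/
theorem newton_map_degree_iff_distinct_roots (P : Polynomial ℂ) (hd : 2 ≤ P.natDegree) :
    IsCoprime (X * Polynomial.derivative P - P) (Polynomial.derivative P) ↔
      P.roots.toFinset.card = P.natDegree := by
  have h0 : P ≠ 0 := by
    rintro rfl
    simp at hd
  have hs : P.Splits := IsAlgClosed.splits P
  rw [hs.natDegree_eq_card_roots, Multiset.toFinset_card_eq_card_iff_nodup,
    nodup_roots_iff_of_splits h0 hs, separable_def]
  constructor
  · rintro ⟨a, b, h⟩
    exact ⟨-a, b + a * X, by rw [← h]; ring⟩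
  · rintro ⟨a, b, h⟩
    exact ⟨-a, b + a * X, by rw [← h]; ring⟩
end

section
/- Let λ₁, λ₂ ∈ ℂ with λ₁ ∉ {0, 3/2, −3/2} and λ₂ ∉ {0, 3/2, −3/2}. Then the following are equivalent: (i) there exist a, c ∈ ℂ with a ≠ 0 such that the affine map h(z) = a·z + c maps the three-element set {−1/2 − λ₁, λ₁ − 1/2, 1} onto the set {−1/2 − λ₂, λ₂ − 1/2, 1}; (ii) there exist a, c ∈ ℂ with a ≠ 0 such that for every z ∈ ℂ with 3z² − (λ₁² + 3/4) ≠ 0, one has 3(a·z + c)² − (λ₂² + 3/4) ≠ 0 and N_{λ₂}(a·z + c) = a·N_{λ₁}(z) + c. In other words, N_{λ₁} and N_{λ₂} are conjugate by an affine map of ℂ if and only if some affine map carries the root set of P_{λ₁} onto the root set of P_{λ₂}. -/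
/-- A quadratic with three distinct zeros has zero coefficients. -/
lemma quad_zero (A B C x y z : ℂ) (hxy : x - y ≠ 0) (hxz : x - z ≠ 0) (hyz : y - z ≠ 0)
    (hx : A * x ^ 2 + B * x + C = 0) (hy : A * y ^ 2 + B * y + C = 0)
    (hz : A * z ^ 2 + B * z + C = 0) : A = 0 ∧ B = 0 ∧ C = 0 := by
  have e1 : A * (x + y) + B = 0 := by
    apply mul_left_cancel₀ hxy
    linear_combination hx - hy
  have e2 : A * (x + z) + B = 0 := by
    apply mul_left_cancel₀ hxz
    linear_combination hx - hz
  have hA : A = 0 := by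
    apply mul_left_cancel₀ hyz
    linear_combination e1 - e2
  subst hA
  have hB : B = 0 := by linear_combination e1
  subst hB
  exact ⟨rfl, rfl, by linear_combination hx⟩

/-- Membership in the root set is the vanishing of the cubic. -/
lemma mem_roots_iff (l w : ℂ) : w ∈ ({-1/2 - l, l - 1/2, 1} : Set ℂ) ↔
    w ^ 3 - (l ^ 2 + 3/4) * w + (l ^ 2 - 1/4) = 0 := by
  have e : w ^ 3 - (l ^ 2 + 3/4) * w + (l ^ 2 - 1/4)
      = (w - (-1/2 - l)) * ((w - (l - 1/2)) * (w - 1)) := by ring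
  rw [e, mul_eq_zero, mul_eq_zero, sub_eq_zero, sub_eq_zero, sub_eq_zero]
  simp only [Set.mem_insert_iff, Set.mem_singleton_iff]

/-- The three roots are pairwise distinct. -/
lemma roots_distinct (l : ℂ) (h : l ∉ ({0, 3/2, -3/2} : Set ℂ)) :
    (-1/2 - l) - (l - 1/2) ≠ 0 ∧ (-1/2 - l) - 1 ≠ 0 ∧ (l - 1/2) - 1 ≠ 0 := by
  simp only [Set.mem_insert_iff, Set.mem_singleton_iff, not_or] at h
  obtain ⟨ha, hb, hc⟩ := h
  refine ⟨fun e => ha ?_, fun e => hc ?_, fun e => hb ?_⟩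
  · linear_combination (-1/2) * e
  · linear_combination (-1) * e
  · linear_combination e

/-- The derivative does not vanish at the roots. -/
lemma deriv_ne (l w : ℂ) (h : l ∉ ({0, 3/2, -3/2} : Set ℂ))
    (hw : w ∈ ({-1/2 - l, l - 1/2, 1} : Set ℂ)) : 3 * w ^ 2 - (l ^ 2 + 3/4) ≠ 0 := by
  obtain ⟨h1, h2, h3⟩ := roots_distinct l h
  rcases hw with rfl | rfl | rfl
  · intro e
    apply mul_ne_zero h1 h2
    linear_combination e
  · intro e
    apply mul_ne_zero h1 h3
    linear_combination -e
  · intro e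
    apply mul_ne_zero h2 h3
    linear_combination e

/-- For `λ₁, λ₂ ∉ {0, 3/2, -3/2}`, the cubic Newton maps `N_{λ₁}` and `N_{λ₂}` are conjugate
by an affine map of `ℂ` if and only if some affine map carries the root set of `P_{λ₁}`
onto the root set of `P_{λ₂}`. -/
theorem newton_cubic_affine_conjugacy (lam₁ lam₂ : ℂ)
    (h₁ : lam₁ ∉ ({0, 3/2, -3/2} : Set ℂ)) (h₂ : lam₂ ∉ ({0, 3/2, -3/2} : Set ℂ)) :
    (∃ a c : ℂ, a ≠ 0 ∧
        (fun z : ℂ => a * z + c) '' ({-1/2 - lam₁, lam₁ - 1/2, 1} : Set ℂ)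
          = ({-1/2 - lam₂, lam₂ - 1/2, 1} : Set ℂ)) ↔
    (∃ a c : ℂ, a ≠ 0 ∧ ∀ z : ℂ, 3 * z ^ 2 - (lam₁ ^ 2 + 3/4) ≠ 0 →
        3 * (a * z + c) ^ 2 - (lam₂ ^ 2 + 3/4) ≠ 0 ∧
        (2 * (a * z + c) ^ 3 - (lam₂ ^ 2 - 1/4)) / (3 * (a * z + c) ^ 2 - (lam₂ ^ 2 + 3/4))
          = a * ((2 * z ^ 3 - (lam₁ ^ 2 - 1/4)) / (3 * z ^ 2 - (lam₁ ^ 2 + 3/4))) + c) := by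
  constructor
  · rintro ⟨a, c, ha, him⟩
    refine ⟨a, c, ha, ?_⟩
    have key : ∀ r ∈ ({-1/2 - lam₁, lam₁ - 1/2, 1} : Set ℂ),
        (3 * a ^ 2 * c) * r ^ 2
          + (3 * a * c ^ 2 - (lam₂ ^ 2 + 3/4) * a + a ^ 3 * (lam₁ ^ 2 + 3/4)) * r
          + (c ^ 3 - (lam₂ ^ 2 + 3/4) * c + (lam₂ ^ 2 - 1/4) - a ^ 3 * (lam₁ ^ 2 - 1/4)) = 0 := by
      intro r hr
      have m : a * r + c ∈ ({-1/2 - lam₂, lam₂ - 1/2, 1} : Set ℂ) := by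
        rw [← him]
        exact ⟨r, hr, rfl⟩
      rw [mem_roots_iff] at m hr
      linear_combination m - a ^ 3 * hr
    obtain ⟨d1, d2, d3⟩ := roots_distinct lam₁ h₁
    obtain ⟨hA, hB, hC⟩ := quad_zero _ _ _ _ _ _ d1 d2 d3
      (key _ (by simp)) (key _ (by simp)) (key _ (by simp))
    have hc : c = 0 := by simpa [ha] using hA
    subst hc
    have hp : lam₂ ^ 2 + 3/4 = a ^ 2 * (lam₁ ^ 2 + 3/4) := by
      apply mul_left_cancel₀ ha
      linear_combination -hB
    have hq : lam₂ ^ 2 - 1/4 = a ^ 3 * (lam₁ ^ 2 - 1/4) := by linear_combination hC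
    intro z hz
    rw [hp, hq]
    have e : 3 * (a * z + 0) ^ 2 - a ^ 2 * (lam₁ ^ 2 + 3/4)
        = a ^ 2 * (3 * z ^ 2 - (lam₁ ^ 2 + 3/4)) := by ring
    have hne : a ^ 2 * (3 * z ^ 2 - (lam₁ ^ 2 + 3/4)) ≠ 0 := mul_ne_zero (pow_ne_zero 2 ha) hz
    rw [e]
    refine ⟨hne, ?_⟩
    rw [div_eq_iff hne]
    generalize hD : 3 * z ^ 2 - (lam₁ ^ 2 + 3/4) = D at hz
    have : (2 * z ^ 3 - (lam₁ ^ 2 - 1/4)) / D * D = 2 * z ^ 3 - (lam₁ ^ 2 - 1/4) :=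
      div_mul_cancel₀ _ hz
    linear_combination (-a ^ 3) * this
  · rintro ⟨a, c, ha, H⟩
    refine ⟨a, c, ha, ?_⟩
    have sub : (fun z : ℂ => a * z + c) '' ({-1/2 - lam₁, lam₁ - 1/2, 1} : Set ℂ)
          ⊆ ({-1/2 - lam₂, lam₂ - 1/2, 1} : Set ℂ) := by
      rintro _ ⟨r, hr, rfl⟩
      have hd := deriv_ne lam₁ r h₁ hr
      obtain ⟨hn, he⟩ := H r hd
      rw [mem_roots_iff] at hr
      have fx : (2 * r ^ 3 - (lam₁ ^ 2 - 1/4)) / (3 * r ^ 2 - (lam₁ ^ 2 + 3/4)) = r := by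
        rw [div_eq_iff hd]
        linear_combination -hr
      rw [fx, div_eq_iff hn] at he
      show a * r + c ∈ _
      rw [mem_roots_iff]
      linear_combination -he
    have inj : Function.Injective (fun z : ℂ => a * z + c) := by
      intro x y hxy
      exact mul_left_cancel₀ ha (add_right_cancel hxy)
    have card : ∀ l : ℂ, l ∉ ({0, 3/2, -3/2} : Set ℂ) →
        ({-1/2 - l, l - 1/2, 1} : Set ℂ).ncard = 3 := by
      intro l hl
      obtain ⟨d1, d2, d3⟩ := roots_distinct l hl
      exact Set.ncard_eq_three.mpr
        ⟨_, _, _, sub_ne_zero.mp d1, sub_ne_zero.mp d2, sub_ne_zero.mp d3, rfl⟩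
    apply Set.eq_of_subset_of_ncard_le sub
    · rw [Set.ncard_image_of_injective _ inj, card _ h₁, card _ h₂]
end

section
/- Let λ, b ∈ ℂ with b ≠ 0 and b³ − (λ² + 3/4)·b + (λ² − 1/4) = 0 (i.e. b is a root of P_λ). Set a = b² − (3/4 + λ²)/3 and assume a ≠ 0. Then for every z ∈ ℂ with 1 + 2z + (a/b²)·z² ≠ 0, setting w = b + (a/b)·z, one has 3w² − (λ² + 3/4) ≠ 0 and (b/a)·(N_λ(w) − b) = z²·(1 + (2/3)·(a/b²)·z)/(1 + 2z + (a/b²)·z²). (This says that the conjugate f_λ = β_λ ∘ N_λ ∘ β_λ^{-1} of N_λ by the affine map β_λ(w) = (b/a)(w − b) is given by f_λ(z) = z²·(1 + (2/3)(a/b²)z)/(1 + 2z + (a/b²)z²).) -/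
/-- Conjugating the cubic Newton map `N_λ` by the affine map `β_λ(w) = (b/a)(w - b)`,
where `b` is a root of `P_λ` and `a = b² - (3/4 + λ²)/3 ≠ 0`, yields the map
`f_λ(z) = z²·(1 + (2/3)(a/b²)z)/(1 + 2z + (a/b²)z²)`. -/
theorem newton_cubic_conjugate_form (lam b : ℂ) (hb : b ≠ 0)
    (hroot : b ^ 3 - (lam ^ 2 + 3/4) * b + (lam ^ 2 - 1/4) = 0)
    (a : ℂ) (ha : a = b ^ 2 - (3/4 + lam ^ 2) / 3) (ha0 : a ≠ 0) :
    ∀ z : ℂ, 1 + 2 * z + (a / b ^ 2) * z ^ 2 ≠ 0 →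
      3 * (b + (a / b) * z) ^ 2 - (lam ^ 2 + 3/4) ≠ 0 ∧
      (b / a) * ((2 * (b + (a / b) * z) ^ 3 - (lam ^ 2 - 1/4)) /
          (3 * (b + (a / b) * z) ^ 2 - (lam ^ 2 + 3/4)) - b)
        = z ^ 2 * (1 + (2/3) * (a / b ^ 2) * z) / (1 + 2 * z + (a / b ^ 2) * z ^ 2) := by
  intro z hz
  have hc : lam ^ 2 + 3/4 = 3 * b ^ 2 - 3 * a := by rw [ha]; ring
  have hd : lam ^ 2 - 1/4 = 2 * b ^ 3 - 3 * a * b := by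
    linear_combination hroot + b * hc
  have hden : 3 * (b + (a / b) * z) ^ 2 - (lam ^ 2 + 3/4)
      = 3 * a * (1 + 2 * z + (a / b ^ 2) * z ^ 2) := by
    rw [hc]; field_simp; ring
  have hnum : 2 * (b + (a / b) * z) ^ 3 - (lam ^ 2 - 1/4)
      = 3 * a * (b * (1 + 2 * z + (a / b ^ 2) * z ^ 2)
        + (a / b) * (z ^ 2 * (1 + (2/3) * (a / b ^ 2) * z))) := by
    rw [hd]; field_simp; ring
  have h3 : (3 : ℂ) * a ≠ 0 := mul_ne_zero (by norm_num) ha0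
  refine ⟨by rw [hden]; exact mul_ne_zero h3 hz, ?_⟩
  rw [hden, hnum, mul_div_mul_left _ _ h3]
  generalize z ^ 2 * (1 + (2/3) * (a / b ^ 2) * z) = u
  generalize 1 + 2 * z + (a / b ^ 2) * z ^ 2 = D at hz
  field_simp
  ring
end

section
/- The set Ξ ∪ {0} is closed in ℝ, perfect (closed with no isolated points), totally disconnected, and has Lebesgue measure zero. -/
/-- The set `Ξ` of Head's angles: angles `θ ∈ (0, 1/2]` with `2^k θ ∈ [θ, 1] (mod ℤ)`
for all `k ≥ 0`. -/
def HeadXi : Set ℝ :=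
  {θ : ℝ | 0 < θ ∧ θ ≤ 1/2 ∧ ∀ k : ℕ, ∃ n : ℤ, θ ≤ 2 ^ k * θ - n ∧ 2 ^ k * θ - n ≤ 1}

theorem headXi_union_eq : HeadXi ∪ {0} =
    {θ : ℝ | 0 ≤ θ ∧ θ ≤ 1/2 ∧ ∀ k : ℕ, ∃ n : ℤ, θ ≤ 2 ^ k * θ - n ∧ 2 ^ k * θ - n ≤ 1} := by
  ext θ
  simp only [HeadXi, Set.mem_union, Set.mem_ofPred_eq, Set.mem_singleton_iff]
  constructor
  · rintro (⟨h1, h2, h3⟩ | rfl)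
    · exact ⟨h1.le, h2, h3⟩
    · exact ⟨le_rfl, by norm_num, fun k => ⟨0, by simp⟩⟩
  · rintro ⟨h1, h2, h3⟩
    rcases h1.eq_or_lt with h | h
    · exact Or.inr h.symm
    · exact Or.inl ⟨h, h2, h3⟩

theorem headXi_isClosed : IsClosed (HeadXi ∪ {0}) := by
  have : HeadXi ∪ {0} = Set.Icc (0:ℝ) (1/2) ∩ ⋂ k : ℕ,
      ⋃ n ∈ Set.Icc (-1 : ℤ) (2 ^ k), {θ : ℝ | θ ≤ 2 ^ k * θ - n ∧ 2 ^ k * θ - n ≤ 1} := by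
    rw [headXi_union_eq]
    ext θ
    simp only [Set.mem_ofPred_eq, Set.mem_inter_iff, Set.mem_iInter, Set.mem_iUnion, Set.mem_Icc,
      exists_prop, and_assoc]
    refine and_congr_right fun h0 => and_congr_right fun h1 => forall_congr' fun k =>
      exists_congr fun n => ?_
    constructor
    · rintro ⟨h2, h3⟩
      have hk : (0:ℝ) < 2 ^ k := by positivity
      refine ⟨?_, ?_, h2, h3⟩
      · have : (-1:ℝ) ≤ n := by nlinarith
        exact_mod_cast this
      · have : (n:ℝ) ≤ 2 ^ k := by nlinarith
        exact_mod_cast this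
    · rintro ⟨_, _, h2, h3⟩
      exact ⟨h2, h3⟩
  rw [this]
  refine isClosed_Icc.inter (isClosed_iInter fun k => ?_)
  refine (Set.finite_Icc _ _).isClosed_biUnion fun n _ => ?_
  have c1 : IsClosed {θ : ℝ | θ ≤ 2 ^ k * θ - n} := isClosed_le (by fun_prop) (by fun_prop)
  have c2 : IsClosed {θ : ℝ | 2 ^ k * θ - n ≤ 1} := isClosed_le (by fun_prop) (by fun_prop)
  exact c1.inter c2

theorem headXi_ceil {θ : ℝ} (hθ : θ ∈ HeadXi) (N : ℕ) (hN : 1 ≤ N) :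
    (⌈2 ^ N * θ⌉ : ℝ) / 2 ^ N ∈ HeadXi := by
  obtain ⟨h0, h1, h2⟩ := hθ
  have hp : (0:ℝ) < 2 ^ N := by positivity
  have hc : 2 ^ N * θ ≤ ⌈2 ^ N * θ⌉ := Int.le_ceil _
  have hy0 : 0 < (⌈2 ^ N * θ⌉ : ℝ) / 2 ^ N := by
    apply div_pos _ hp
    have : 0 < 2 ^ N * θ := by positivity
    linarith
  have hy1 : (⌈2 ^ N * θ⌉ : ℝ) / 2 ^ N ≤ 1/2 := by
    obtain ⟨m, rfl⟩ : ∃ m, N = m + 1 := ⟨N - 1, by omega⟩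
    have : ⌈2 ^ (m+1) * θ⌉ ≤ 2 ^ m := by
      rw [Int.ceil_le]; push_cast
      rw [pow_succ]
      have : (0:ℝ) < 2 ^ m := by positivity
      nlinarith
    have : (⌈2 ^ (m+1) * θ⌉ : ℝ) ≤ 2 ^ m := by exact_mod_cast this
    rw [div_le_iff₀ hp]
    have e : (2:ℝ) ^ (m + 1) = 2 ^ m * 2 := pow_succ _ _
    linarith
  refine ⟨hy0, hy1, fun k => ?_⟩
  rcases lt_or_ge k N with hk | hk
  · obtain ⟨n, ha, hb⟩ := h2 k
    refine ⟨n, ?_⟩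
    obtain ⟨r, rfl⟩ : ∃ r, N = k + r := ⟨N - k, by omega⟩
    have hr : (0:ℝ) < 2 ^ r := by positivity
    have hkp : (0:ℝ) < 2 ^ k := by positivity
    have e : (2:ℝ) ^ k * (⌈2 ^ (k + r) * θ⌉ / 2 ^ (k + r)) - n
        = (⌈2 ^ (k + r) * θ⌉ - 2 ^ r * n) / 2 ^ r := by
      rw [pow_add]; field_simp
    rw [e]
    constructor
    · rw [pow_add, div_le_div_iff₀ (by positivity) hr, ← pow_add]
      have : ⌈2 ^ (k + r) * θ⌉ ≤ 2 ^ k * (⌈2 ^ (k + r) * θ⌉ - 2 ^ r * n) := by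
        rw [Int.ceil_le]; push_cast
        have : 2 ^ r * θ ≤ ⌈2 ^ (k + r) * θ⌉ - 2 ^ r * n := by
          have := mul_le_mul_of_nonneg_left ha hr.le
          have e2 : (2:ℝ) ^ r * (2 ^ k * θ - n) = 2 ^ (k + r) * θ - 2 ^ r * n := by
            rw [pow_add]; ring
          linarith
        have := mul_le_mul_of_nonneg_left this hkp.le
        calc (2:ℝ) ^ (k + r) * θ = 2 ^ k * (2 ^ r * θ) := by rw [pow_add]; ring
          _ ≤ _ := this
      have : (⌈2 ^ (k + r) * θ⌉ : ℝ) ≤ 2 ^ k * (⌈2 ^ (k + r) * θ⌉ - 2 ^ r * n) := by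
        exact_mod_cast this
      calc (⌈2 ^ (k + r) * θ⌉ : ℝ) * 2 ^ r
          ≤ (2 ^ k * (⌈2 ^ (k + r) * θ⌉ - 2 ^ r * n)) * 2 ^ r :=
            mul_le_mul_of_nonneg_right this hr.le
        _ = _ := by rw [pow_add]; ring
    · rw [div_le_one hr]
      have : ⌈2 ^ (k + r) * θ⌉ ≤ 2 ^ r + 2 ^ r * n := by
        rw [Int.ceil_le]; push_cast
        have := mul_le_mul_of_nonneg_left hb hr.le
        rw [pow_add]
        linarith
      have : (⌈2 ^ (k + r) * θ⌉ : ℝ) ≤ 2 ^ r + 2 ^ r * n := by exact_mod_cast this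
      linarith
  · obtain ⟨r, rfl⟩ : ∃ r, k = N + r := ⟨k - N, by omega⟩
    refine ⟨2 ^ r * ⌈2 ^ N * θ⌉ - 1, ?_⟩
    have e : (2:ℝ) ^ (N + r) * (⌈2 ^ N * θ⌉ / 2 ^ N) - ((2 ^ r * ⌈2 ^ N * θ⌉ - 1 : ℤ) : ℝ) = 1 := by
      push_cast
      rw [pow_add]; field_simp; ring
    rw [e]
    exact ⟨by linarith, le_rfl⟩

theorem headXi_dyadic {θ : ℝ} (hθ : θ ∈ HeadXi) (N : ℕ) (hN : 1 ≤ N) (M : ℤ) (hM : Odd M)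
    (hNM : 2 ^ N * θ = M) (p : ℕ) (hp : 2 * N + 1 ≤ p) :
    θ - (1 - θ) / (2 ^ p - 1) ∈ HeadXi := by
  obtain ⟨h0, h1, h2⟩ := hθ
  have hA : (2:ℝ) ≤ 2 ^ N := by
    calc (2:ℝ) = 2 ^ 1 := by norm_num
      _ ≤ 2 ^ N := pow_le_pow_right₀ (by norm_num) hN
  have hQ : (2:ℝ) ^ N * 2 ^ N * 2 ≤ 2 ^ p := by
    calc (2:ℝ) ^ N * 2 ^ N * 2 = 2 ^ (2 * N + 1) := by ring
      _ ≤ 2 ^ p := pow_le_pow_right₀ (by norm_num) hp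
  have hQ1 : (2:ℝ) ^ N * 2 ^ N ≤ 2 ^ p - 1 := by nlinarith
  have hQ0 : (0:ℝ) < 2 ^ p - 1 := by nlinarith
  obtain ⟨δ, hδ⟩ : ∃ δ, δ = (1 - θ) / (2 ^ p - 1) := ⟨_, rfl⟩
  rw [← hδ]
  have hδe : δ * (2 ^ p - 1) = 1 - θ := by rw [hδ]; field_simp
  have hδ0 : 0 < δ := by rw [hδ]; exact div_pos (by linarith) hQ0
  have hδA : 2 ^ N * (2 ^ N * δ) < 1 := by nlinarith
  have hMpos : (1:ℝ) ≤ M := by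
    have : (0:ℝ) < M := by rw [← hNM]; positivity
    have : 0 < M := by exact_mod_cast this
    exact_mod_cast this
  refine ⟨?_, by linarith, ?_⟩
  · by_contra hcon
    have h3 : θ ≤ δ := by linarith
    have h4 : 2 ^ N * θ ≤ 2 ^ N * (2 ^ N * δ) := by
      apply mul_le_mul_of_nonneg_left _ (by positivity)
      nlinarith
    linarith
  intro k
  induction k using Nat.strong_induction_on with
  | _ k ih =>
  rcases lt_or_ge k p with hk | hk
  · rcases lt_or_ge k N with hkN | hkN
    · rcases Nat.eq_zero_or_pos k with rfl | hk0
      · exact ⟨0, by simp, by simp; linarith⟩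
      obtain ⟨n, ha, hb⟩ := h2 k
      have hkp : (0:ℝ) < 2 ^ k := by positivity
      refine ⟨n, ?_, by nlinarith⟩
      have hne : 2 ^ k * M - 2 ^ N * n ≠ M := by
        intro h
        have e1 : Even ((2:ℤ) ^ k * M) := (Even.pow_of_ne_zero (by decide) hk0.ne').mul_right _
        have e2 : Even ((2:ℤ) ^ N * n) :=
          (Even.pow_of_ne_zero (by decide) (by omega)).mul_right _
        have := e1.sub e2
        rw [h] at this
        exact (Int.not_even_iff_odd.mpr hM) this
      have hle : M ≤ 2 ^ k * M - 2 ^ N * n := by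
        have : (M:ℝ) ≤ 2 ^ k * M - 2 ^ N * n := by
          rw [← hNM]
          have := mul_le_mul_of_nonneg_left ha (show (0:ℝ) ≤ 2 ^ N by positivity)
          linarith
        exact_mod_cast this
      have hlt : M + 1 ≤ 2 ^ k * M - 2 ^ N * n := by omega
      have hlt' : (M:ℝ) + 1 ≤ 2 ^ k * M - 2 ^ N * n := by exact_mod_cast hlt
      rw [← hNM] at hlt'
      have hkN' : (2:ℝ) ^ k ≤ 2 ^ N := pow_le_pow_right₀ (by norm_num) hkN.le
      have h5 : 2 ^ N * (2 ^ k * δ) ≤ 2 ^ N * (2 ^ N * δ) := by gcongr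
      have h6 : (2:ℝ) ^ N * (θ + 2 ^ k * δ) ≤ 2 ^ N * (2 ^ k * θ - n) := by linarith
      have h7 := le_of_mul_le_mul_left h6 (by positivity)
      linarith
    · obtain ⟨r, rfl⟩ : ∃ r, k = N + r := ⟨k - N, by omega⟩
      refine ⟨2 ^ r * M - 1, ?_⟩
      have e : (2:ℝ) ^ (N + r) * (θ - δ) - ((2 ^ r * M - 1 : ℤ) : ℝ) = 1 - 2 ^ (N + r) * δ := by
        push_cast
        rw [← hNM, pow_add]; ring
      rw [e]
      have hkp : (2:ℝ) ^ (N + r) ≤ 2 ^ p := pow_le_pow_right₀ (by norm_num) hk.le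
      have : (0:ℝ) < 2 ^ (N + r) := by positivity
      constructor <;> nlinarith
  · obtain ⟨j, rfl⟩ : ∃ j, k = j + p := ⟨k - p, by omega⟩
    obtain ⟨n, hn⟩ := ih j (by omega)
    obtain ⟨r, rfl⟩ : ∃ r, p = N + r := ⟨p - N, by omega⟩
    refine ⟨n + 2 ^ j * (2 ^ r * M - 1), ?_⟩
    have e : (2:ℝ) ^ (j + (N + r)) * (θ - δ) - ((n + 2 ^ j * (2 ^ r * M - 1) : ℤ) : ℝ)
        = 2 ^ j * (θ - δ) - n := by
      push_cast
      have e3 : δ * 2 ^ (N + r) = 1 - θ + δ := by linarith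
      have e4 : (2:ℝ) ^ (N + r) * θ = 2 ^ r * M := by rw [← hNM, pow_add]; ring
      calc _ = 2 ^ j * (2 ^ (N + r) * θ - δ * 2 ^ (N + r)) - (n + 2 ^ j * (2 ^ r * M - 1)) := by
            rw [pow_add _ j]; ring
        _ = _ := by rw [e3, e4]; ring
    rw [e]
    exact hn

theorem headXi_half : (1/2 : ℝ) ∈ HeadXi := by
  refine ⟨by norm_num, le_rfl, fun k => ?_⟩
  rcases k with _ | k
  · exact ⟨0, by norm_num⟩
  · refine ⟨2 ^ k - 1, ?_⟩
    push_cast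
    have : (2:ℝ) ^ (k + 1) * (1 / 2) - (2 ^ k - 1) = 1 := by rw [pow_succ]; ring
    rw [this]; norm_num

theorem headXi_two_pow (N : ℕ) (hN : 1 ≤ N) : (1 / 2 ^ N : ℝ) ∈ HeadXi := by
  refine ⟨by positivity, ?_, fun k => ?_⟩
  · apply one_div_le_one_div_of_le (by norm_num)
    calc (2:ℝ) = 2 ^ 1 := by norm_num
      _ ≤ 2 ^ N := pow_le_pow_right₀ (by norm_num) hN
  · have h1 : (1:ℝ) ≤ 2 ^ N := one_le_pow₀ (by norm_num)
    rcases lt_or_ge k N with hk | hk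
    · refine ⟨0, ?_⟩
      have h2 : (1:ℝ) ≤ 2 ^ k := one_le_pow₀ (by norm_num)
      have h3 : (2:ℝ) ^ k ≤ 2 ^ N := pow_le_pow_right₀ (by norm_num) hk.le
      have e : (2:ℝ) ^ k * (1 / 2 ^ N) - ((0:ℤ):ℝ) = 2 ^ k / 2 ^ N := by
        push_cast; ring
      rw [e]
      exact ⟨by gcongr, by rw [div_le_one (by positivity)]; exact h3⟩
    · obtain ⟨r, rfl⟩ : ∃ r, k = N + r := ⟨k - N, by omega⟩
      refine ⟨2 ^ r - 1, ?_⟩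
      have e : (2:ℝ) ^ (N + r) * (1 / 2 ^ N) - ((2 ^ r - 1 : ℤ):ℝ) = 1 := by
        push_cast; rw [pow_add]; field_simp; ring
      rw [e]
      exact ⟨by rw [div_le_one (by positivity)]; exact h1, le_rfl⟩

theorem headXi_approx {θ : ℝ} (hθ : θ ∈ HeadXi ∪ {0}) {ε : ℝ} (hε : 0 < ε) :
    ∃ y ∈ HeadXi ∪ {0}, y ≠ θ ∧ |y - θ| < ε := by
  obtain ⟨q, hq⟩ := pow_unbounded_of_one_lt (1 / ε + 1) (show (1:ℝ) < 2 by norm_num)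
  have hεq : ∀ p, q ≤ p → 1 < ε * (2 ^ p - 1) := by
    intro p hp
    have h1 : (2:ℝ) ^ q ≤ 2 ^ p := pow_le_pow_right₀ (by norm_num) hp
    have h2 : 1 / ε < 2 ^ p - 1 := by linarith
    rw [div_lt_iff₀ hε] at h2
    linarith
  rcases hθ with hθ | hθ
  · by_cases hd : ∃ N : ℕ, ∃ M : ℤ, 2 ^ N * θ = M
    · classical
      obtain ⟨M, hNM⟩ := Nat.find_spec hd
      have hmin := fun m => @Nat.find_min _ _ hd m
      obtain ⟨N, hN⟩ : ∃ N, N = Nat.find hd := ⟨_, rfl⟩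
      rw [← hN] at hNM hmin
      have hN1 : 1 ≤ N := by
        by_contra hcon
        have : N = 0 := by omega
        rw [this] at hNM
        simp only [pow_zero, one_mul] at hNM
        have h0 := hθ.1
        have h1 := hθ.2.1
        rw [hNM] at h0 h1
        have h2 : (M:ℝ) < 1 := by linarith
        have h3 : 0 < M := by exact_mod_cast h0
        have h4 : M < 1 := by exact_mod_cast h2
        omega
      have hM : Odd M := by
        rw [← Int.not_even_iff_odd]
        rintro ⟨m, hm⟩
        obtain ⟨r, rfl⟩ : ∃ r, N = r + 1 := ⟨N - 1, by omega⟩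
        apply hmin r (by omega)
        refine ⟨m, ?_⟩
        rw [hm, pow_succ] at hNM
        push_cast at hNM
        linarith
      have hp : 2 * N + 1 ≤ 2 * N + 1 + q := by omega
      have hmem := headXi_dyadic hθ N hN1 M hM hNM _ hp
      have hE := hεq (2 * N + 1 + q) (by omega)
      have hpos : (0:ℝ) < 2 ^ (2 * N + 1 + q) - 1 := by
        by_contra hcon
        nlinarith
      have hδ : 0 < (1 - θ) / (2 ^ (2 * N + 1 + q) - 1) := by
        apply div_pos _ hpos
        have := hθ.2.1
        linarith
      refine ⟨_, Or.inl hmem, by linarith, ?_⟩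
      rw [show ∀ a : ℝ, θ - a - θ = -a from fun a => by ring, abs_neg, abs_of_pos hδ,
        div_lt_iff₀ hpos]
      have := hθ.1
      linarith
    · have hmem := headXi_ceil hθ (q + 1) (by omega)
      have hE := hεq (q + 1) (by omega)
      have hp : (0:ℝ) < 2 ^ (q + 1) := by positivity
      refine ⟨_, Or.inl hmem, ?_, ?_⟩
      · intro h
        apply hd
        refine ⟨q + 1, ⌈2 ^ (q + 1) * θ⌉, ?_⟩
        rw [div_eq_iff hp.ne'] at h
        linarith
      · have h1 : 2 ^ (q+1) * θ ≤ ⌈2 ^ (q+1) * θ⌉ := Int.le_ceil _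
        have h2 := Int.ceil_lt_add_one (2 ^ (q+1) * θ)
        have e : (⌈2 ^ (q + 1) * θ⌉ : ℝ) / 2 ^ (q + 1) - θ
            = (⌈2 ^ (q + 1) * θ⌉ - 2 ^ (q + 1) * θ) / 2 ^ (q + 1) := by field_simp
        rw [e, abs_of_nonneg (div_nonneg (by linarith) hp.le), div_lt_iff₀ hp]
        linarith
  · rw [Set.mem_singleton_iff] at hθ
    subst hθ
    have hE := hεq (q + 1) (by omega)
    have hp : (0:ℝ) < 2 ^ (q + 1) := by positivity
    refine ⟨_, Or.inl (headXi_two_pow (q + 1) (by omega)), by positivity, ?_⟩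
    rw [sub_zero, abs_of_pos (by positivity), div_lt_iff₀ hp]
    linarith

theorem headXi_preperfect : Preperfect (HeadXi ∪ {0}) := by
  intro θ hθ
  rw [accPt_iff_nhds]
  intro U hU
  obtain ⟨ε, hε, hb⟩ := Metric.mem_nhds_iff.mp hU
  obtain ⟨y, hy, hne, hlt⟩ := headXi_approx hθ hε
  exact ⟨y, ⟨hb (by rw [Metric.mem_ball, Real.dist_eq]; exact hlt), hy⟩, hne⟩

open MeasureTheory in
theorem headXi_avoid_null (ε : ℝ) (hε : 0 < ε) :
    volume {t : UnitAddCircle | ∀ k : ℕ,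
      (2 ^ k) • t ∉ ((fun x : ℝ => (x : UnitAddCircle)) '' Set.Ioo 0 ε)} = 0 := by
  set U : Set UnitAddCircle := (fun x : ℝ => (x : UnitAddCircle)) '' Set.Ioo 0 ε with hU
  have hUo : IsOpen U := QuotientAddGroup.isOpenMap_coe _ isOpen_Ioo
  have hUn : U.Nonempty := (Set.nonempty_Ioo.mpr hε).image _
  set E : Set UnitAddCircle := {t | ∀ k : ℕ, (2 ^ k) • t ∉ U} with hE
  have hEm : MeasurableSet E := by
    have : IsClosed E := by
      have : E = ⋂ k : ℕ, (fun t : UnitAddCircle => (2 ^ k) • t) ⁻¹' Uᶜ := by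
        ext t; simp [hE]
      rw [this]
      exact isClosed_iInter fun k => hUo.isClosed_compl.preimage (by fun_prop)
    exact this.measurableSet
  have herg : Ergodic (fun t : UnitAddCircle => 2 • t) := AddCircle.ergodic_nsmul (by norm_num)
  have hsub : E ⊆ (fun t : UnitAddCircle => 2 • t) ⁻¹' E := by
    intro t ht k
    have := ht (k + 1)
    rw [pow_succ, mul_smul] at this
    exact this
  rcases herg.ae_empty_or_univ_of_ae_le_preimage hEm.nullMeasurableSet
    (Filter.Eventually.of_forall hsub) with h | h
  · exact ae_eq_empty.mp h
  · exfalso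
    have h0 : volume Eᶜ = 0 := ae_eq_univ.mp h
    have h1 : U ⊆ Eᶜ := by
      intro t ht hc
      apply hc 0
      simpa using ht
    exact (hUo.measure_pos volume hUn).ne' (measure_mono_null h1 h0)

open MeasureTheory in
theorem headXi_null : volume (HeadXi ∪ {0}) = 0 := by
  have hcov : HeadXi ∪ {0} ⊆ {0} ∪ ⋃ m : ℕ,
      ((fun x : ℝ => (x : UnitAddCircle)) ⁻¹' {t : UnitAddCircle | ∀ k : ℕ,
        (2 ^ k) • t ∉ ((fun x : ℝ => (x : UnitAddCircle)) '' Set.Ioo 0 (1 / ((m:ℝ) + 1)))}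
        ∩ Set.Ioc 0 (0 + 1)) := by
    rintro θ (⟨h0, h1, h2⟩ | h)
    · right
      obtain ⟨m, hm⟩ := exists_nat_one_div_lt h0
      refine Set.mem_iUnion.mpr ⟨m, ?_, h0, by linarith⟩
      rintro k ⟨u, ⟨hu0, hu1⟩, hu⟩
      obtain ⟨n, ha, hb⟩ := h2 k
      have hu' : ((u - 2 ^ k * θ : ℝ) : UnitAddCircle) = 0 := by
        have e : ((2 ^ k * θ : ℝ) : UnitAddCircle) = (2 ^ k) • (θ : UnitAddCircle) := by
          rw [← AddCircle.coe_nsmul, nsmul_eq_mul]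
          push_cast
          rfl
        rw [AddCircle.coe_sub, e, sub_eq_zero]
        exact hu
      obtain ⟨j, hj⟩ := (AddCircle.coe_eq_zero_iff (1:ℝ)).mp hu'
      rw [zsmul_eq_mul, mul_one] at hj
      have h3 : ((j + n : ℤ) : ℝ) < 0 := by push_cast; linarith
      have h4 : (-1 : ℝ) < ((j + n : ℤ) : ℝ) := by push_cast; linarith
      have h5 : j + n < 0 := by exact_mod_cast h3
      have h6 : -1 < j + n := by exact_mod_cast h4
      omega
    · exact Or.inl h
  refine measure_mono_null hcov (measure_union_null (by simp) (measure_iUnion_null fun m => ?_))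
  have hmp := AddCircle.measurePreserving_mk (1:ℝ) 0
  have hz := headXi_avoid_null (1 / ((m:ℝ) + 1)) (by positivity)
  have := hmp.quasiMeasurePreserving.preimage_null hz
  rwa [Measure.restrict_apply' measurableSet_Ioc] at this

theorem headXi_totallyDisconnected : IsTotallyDisconnected (HeadXi ∪ {0}) := by
  intro t ht hc x hx y hy
  by_contra hne
  wlog hlt : x < y generalizing x y
  · exact this hy hx (Ne.symm hne) (lt_of_le_of_ne (not_lt.mp hlt) (Ne.symm hne))
  have h1 : Set.Icc x y ⊆ HeadXi ∪ {0} := (hc.Icc_subset hx hy).trans ht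
  have h2 := MeasureTheory.measure_mono_null h1 headXi_null
  rw [Real.volume_Icc, ENNReal.ofReal_eq_zero] at h2
  linarith

/-- The set `Ξ ∪ {0}` is closed, perfect, totally disconnected, and has Lebesgue
measure zero. -/
theorem headXi_closed_perfect_totallyDisconnected_measure_zero :
    IsClosed (HeadXi ∪ {0}) ∧ Perfect (HeadXi ∪ {0}) ∧
      IsTotallyDisconnected (HeadXi ∪ {0}) ∧
      MeasureTheory.volume (HeadXi ∪ {0}) = 0 :=
  ⟨headXi_isClosed, ⟨headXi_isClosed, headXi_preperfect⟩, headXi_totallyDisconnected,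
    headXi_null⟩
end

section
/- Let β, α ∈ ℝ with β ∈ Ξ ∪ {0}, α ∈ Ξ, β < α, and (β, α) ∩ Ξ = ∅ (so that the open interval (β, α) is a connected component of (0, 1/2) ∖ Ξ). Then there exist integers n ≥ 2 and p ≥ 1 such that α = p/(2ⁿ − 1) and β = p/2ⁿ. -/
/-- Left-continuous integer part. -/
noncomputable def cN (θ : ℝ) (k : ℕ) : ℤ := ⌈2 ^ k * θ⌉ - 1

lemma cN_lt (θ : ℝ) (k : ℕ) : 0 < 2 ^ k * θ - cN θ k := by
  have := Int.ceil_lt_add_one (2 ^ k * θ)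
  unfold cN; push_cast; linarith

lemma cN_le (θ : ℝ) (k : ℕ) : 2 ^ k * θ - cN θ k ≤ 1 := by
  have := Int.le_ceil (2 ^ k * θ)
  unfold cN; push_cast; linarith

lemma cN_unique {θ : ℝ} {k : ℕ} {n : ℤ} (h0 : 0 < 2 ^ k * θ - n) (h1 : 2 ^ k * θ - n ≤ 1) :
    n = cN θ k := by
  have a := cN_lt θ k
  have b := cN_le θ k
  have h2 : (n : ℝ) < cN θ k + 1 := by linarith
  have h3 : (cN θ k : ℝ) < n + 1 := by linarith
  have h2' : n < cN θ k + 1 := by exact_mod_cast h2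
  have h3' : cN θ k < n + 1 := by exact_mod_cast h3
  omega

lemma mem_le {θ : ℝ} (h : θ ∈ HeadXi) (k : ℕ) : θ ≤ 2 ^ k * θ - cN θ k := by
  obtain ⟨h0, _, h2⟩ := h
  obtain ⟨n, a, b⟩ := h2 k
  rw [← cN_unique (by linarith) b]; exact a

/-- Truncating at the first bad time gives an element of the set. -/
lemma trunc_mem {θ : ℝ} (h0 : 0 < θ) (h1 : θ ≤ 1 / 2) {n : ℕ}
    (hn : 2 ^ n * θ - cN θ n < θ) (hk : ∀ k < n, θ ≤ 2 ^ k * θ - cN θ k) :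
    (cN θ n : ℝ) / 2 ^ n ∈ HeadXi := by
  have hp : (0 : ℝ) < 2 ^ n := by positivity
  have hone : (1 : ℝ) ≤ 2 ^ n := one_le_pow₀ (by norm_num)
  have hNpos : (0 : ℝ) < cN θ n := by nlinarith
  have hdle : (cN θ n : ℝ) / 2 ^ n ≤ θ := by
    rw [div_le_iff₀ hp]; have := cN_lt θ n; linarith
  refine ⟨by positivity, by linarith, ?_⟩
  intro k
  rcases Nat.eq_zero_or_pos k with rfl | hkpos
  · exact ⟨0, by simp, by simp; linarith⟩
  rcases le_or_gt n k with hnk | hkn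
  · obtain ⟨j, rfl⟩ := Nat.exists_eq_add_of_le hnk
    have e : (2 : ℝ) ^ (n + j) * ((cN θ n : ℝ) / 2 ^ n) = 2 ^ j * cN θ n := by
      rw [pow_add]; field_simp
    refine ⟨2 ^ j * cN θ n - 1, ?_, ?_⟩
    · rw [e]; push_cast; linarith
    · rw [e]; push_cast; linarith
  · obtain ⟨i, rfl⟩ := Nat.exists_eq_add_of_le hkn.le
    have hpi : (0 : ℝ) < 2 ^ i := by positivity
    have e : (2 : ℝ) ^ k * ((cN θ (k + i) : ℝ) / 2 ^ (k + i)) = cN θ (k + i) / 2 ^ i := by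
      rw [pow_add]; field_simp
    refine ⟨cN θ k, ?_, ?_⟩
    · refine hdle.trans ?_
      rw [e]
      have a1 := hk k (by omega)
      have a2 := hk i (by omega)
      have a3 := cN_le θ i
      have a4 : (2 : ℝ) ^ i * θ ≤ 2 ^ i * (2 ^ k * θ - cN θ k) :=
        mul_le_mul_of_nonneg_left a1 hpi.le
      have e2 : (2 : ℝ) ^ (k + i) * θ = 2 ^ i * (2 ^ k * θ) := by rw [pow_add]; ring
      rw [e2] at hn
      have a5 : (cN θ i : ℝ) < cN θ (k + i) - 2 ^ i * cN θ k := by linarith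
      have a6 : cN θ i + 1 ≤ cN θ (k + i) - 2 ^ i * cN θ k := by
        have : cN θ i < cN θ (k + i) - 2 ^ i * cN θ k := by exact_mod_cast a5
        omega
      have a7 : (cN θ i : ℝ) + 1 ≤ cN θ (k + i) - 2 ^ i * cN θ k := by exact_mod_cast a6
      rw [le_sub_iff_add_le, le_div_iff₀ hpi]
      linarith
    · have := mul_le_mul_of_nonneg_left hdle (by positivity : (0 : ℝ) ≤ 2 ^ k)
      have := cN_le θ k
      linarith

/-- If `(β, α)` is a connected component of `(0, 1/2) ∖ Ξ`, then `α = p/(2ⁿ - 1)` and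
`β = p/2ⁿ` for some integers `n ≥ 2`, `p ≥ 1`. -/
theorem headXi_gap_endpoints (β α : ℝ) (hβ : β ∈ HeadXi ∪ {0}) (hα : α ∈ HeadXi)
    (hlt : β < α) (hgap : Set.Ioo β α ∩ HeadXi = ∅) :
    ∃ n p : ℕ, 2 ≤ n ∧ 1 ≤ p ∧
      α = (p : ℝ) / (2 ^ n - 1) ∧ β = (p : ℝ) / 2 ^ n := by
  obtain ⟨hα0, hα1, -⟩ := id hα
  have hβ0 : 0 ≤ β := by
    rcases hβ with h | h
    · exact h.1.le
    · exact (Set.mem_singleton_iff.1 h).ge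
  have hnot : ∀ θ, β < θ → θ < α → θ ∉ HeadXi := fun θ h1 h2 h3 => by
    have : θ ∈ Set.Ioo β α ∩ HeadXi := ⟨⟨h1, h2⟩, h3⟩
    rw [hgap] at this; exact this
  obtain ⟨J, hJ⟩ := exists_pow_lt_of_lt_one (show (0 : ℝ) < (α - β) / 2 by linarith)
    (show (1 / 2 : ℝ) < 1 by norm_num)
  have hev : ∀ᶠ θ : ℝ in nhdsWithin α (Set.Iio α), ∀ k ∈ Finset.range J,
      0 < 2 ^ k * θ - cN α k ∧ (α < 2 ^ k * α - cN α k → α < 2 ^ k * θ - cN α k) := by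
    rw [Filter.eventually_all_finset]
    intro k _
    apply Filter.Eventually.filter_mono nhdsWithin_le_nhds
    have hc : ContinuousAt (fun θ : ℝ => 2 ^ k * θ - (cN α k : ℝ)) α := by fun_prop
    refine (hc.eventually_const_lt (cN_lt α k)).and ?_
    by_cases h : α < 2 ^ k * α - cN α k
    · exact (hc.eventually_const_lt h).mono fun θ h _ => h
    · exact Filter.Eventually.of_forall fun θ h' => absurd h' h
  have hev2 : ∀ᶠ θ : ℝ in nhdsWithin α (Set.Iio α), θ ∈ Set.Ioo ((α + β) / 2) α :=
    Ioo_mem_nhdsLT (by linarith)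
  obtain ⟨θ, hθ, hθ1, hθ2⟩ := (hev.and hev2).exists
  have hθ0 : 0 < θ := by linarith
  have hbad : ∃ k : ℕ, 2 ^ k * θ - cN θ k < θ := by
    by_contra! hcon
    exact hnot θ (by linarith) hθ2 ⟨hθ0, by linarith, fun k => ⟨cN θ k, hcon k, cN_le θ k⟩⟩
  classical
  obtain ⟨n, hn, hmin⟩ : ∃ n : ℕ, 2 ^ n * θ - cN θ n < θ ∧ ∀ k < n, θ ≤ 2 ^ k * θ - cN θ k :=
    ⟨Nat.find hbad, Nat.find_spec hbad, fun k hk => not_lt.1 (Nat.find_min hbad hk)⟩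
  have hd := trunc_mem hθ0 (by linarith) hn hmin
  have hp : (0 : ℝ) < 2 ^ n := by positivity
  have hdθ : (cN θ n : ℝ) / 2 ^ n < θ := by
    rw [div_lt_iff₀ hp]; have := cN_lt θ n; linarith
  have hdβ : (cN θ n : ℝ) / 2 ^ n ≤ β := by
    by_contra! h
    exact hnot _ h (by linarith) hd
  have hnJ : n < J := by
    by_contra! h
    have h1 : ((1 : ℝ) / 2) ^ n ≤ (1 / 2) ^ J := pow_le_pow_of_le_one (by norm_num) (by norm_num) h
    have h2 : θ - (cN θ n : ℝ) / 2 ^ n ≤ (1 / 2) ^ n := by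
      rw [one_div, inv_pow, ← one_div, sub_le_iff_le_add, ← add_div, le_div_iff₀ hp]
      have := cN_le θ n
      linarith
    linarith
  obtain ⟨b1, b2⟩ := hθ n (Finset.mem_range.2 hnJ)
  have hN : cN α n = cN θ n := by
    apply cN_unique b1
    have := cN_le α n
    have := mul_lt_mul_of_pos_left hθ2 hp
    linarith
  have hper : 2 ^ n * α - cN α n = α := by
    refine le_antisymm ?_ (mem_le hα n)
    by_contra! h
    have := b2 h
    rw [hN] at this
    linarith
  rw [hN] at hper
  have hNr : (0 : ℝ) < cN θ n := by
    have := hd.1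
    rwa [lt_div_iff₀ hp, zero_mul] at this
  have hNi : 0 < cN θ n := by exact_mod_cast hNr
  obtain ⟨p, hpN⟩ := Int.eq_ofNat_of_zero_le hNi.le
  rw [hpN] at hper hdβ hdθ hNr hNi hd
  push_cast at hper hdβ hdθ hNr hd
  have hp1 : 1 ≤ p := by exact_mod_cast hNi
  have hp1r : (1 : ℝ) ≤ p := by exact_mod_cast hp1
  have hn2 : 2 ≤ n := by
    by_contra! h
    interval_cases n
    · linarith
    · linarith
  have h4 : (2 : ℝ) ^ 2 ≤ 2 ^ n := pow_le_pow_right₀ (by norm_num) hn2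
  refine ⟨n, p, hn2, hp1, ?_, ?_⟩
  · rw [eq_div_iff (by linarith)]; linarith
  · refine le_antisymm ?_ hdβ
    by_contra! h
    have hβΞ : β ∈ HeadXi := by
      rcases hβ with h' | h'
      · exact h'
      · rw [Set.mem_singleton_iff] at h'
        have := hd.1
        linarith
    rw [div_lt_iff₀ hp] at h
    have h5 : 2 ^ n * β - p < β := by nlinarith
    have h6 : ((p : ℤ) : ℤ) = cN β n := by
      apply cN_unique
      · push_cast; linarith
      · push_cast; linarith
    have h7 := mem_le hβΞ n
    rw [← h6] at h7
    push_cast at h7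
    linarith
end

section
/- (i) If θ ∈ Ξ is a dyadic rational with θ < 1/2, then there exist integers p, m ≥ 1 with θ = p/2^m such that p/(2^m − 1) ∈ Ξ and the open interval (p/2^m, p/(2^m − 1)) is disjoint from Ξ; that is, θ is the infimum of a connected component of (0, 1/2) ∖ Ξ whose supremum is p/(2^m − 1). (ii) If θ ∈ Ξ and θ = q/(2^r − 1) for some integers q, r ≥ 1, then there exist integers p, n ≥ 1 with θ = p/(2ⁿ − 1) such that p/2ⁿ ∈ Ξ and the open interval (p/2ⁿ, p/(2ⁿ − 1)) is disjoint from Ξ; that is, θ is the supremum of a connected component of (0, 1/2) ∖ Ξ whose infimum is p/2ⁿ. -/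
theorem headXi_gap (p m : ℕ) (hm : 1 ≤ m) :
    Set.Ioo ((p : ℝ) / 2 ^ m) ((p : ℝ) / (2 ^ m - 1)) ∩ HeadXi = ∅ := by
  ext t
  simp only [Set.mem_inter_iff, Set.mem_Ioo, Set.mem_empty_iff_false, iff_false]
  rintro ⟨⟨h1, h2⟩, -, -, h⟩
  have hB : (1 : ℝ) < 2 ^ m := one_lt_pow₀ (by norm_num) (by omega)
  rw [div_lt_iff₀ (by linarith)] at h1
  rw [lt_div_iff₀ (by linarith)] at h2
  obtain ⟨n, ha, hb⟩ := h m
  have h3 : (n : ℝ) < (p : ℤ) := by push_cast; linarith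
  have h4 : ((p : ℤ) : ℝ) < n + 1 := by push_cast; linarith
  have h5 : n < (p : ℤ) := by exact_mod_cast h3
  have h6 : (p : ℤ) < n + 1 := by exact_mod_cast h4
  omega

theorem headXi_dyadic_part (θ : ℝ) (hθ : θ ∈ HeadXi) (hlt : θ < 1/2)
    (hex : ∃ m p : ℕ, θ = (p : ℝ) / 2 ^ m) :
    ∃ p m : ℕ, 1 ≤ p ∧ 1 ≤ m ∧ θ = (p : ℝ) / 2 ^ m ∧
        ((p : ℝ) / (2 ^ m - 1)) ∈ HeadXi := by
  classical
  obtain ⟨h0, -, hk⟩ := hθ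
  obtain ⟨p, hp⟩ := Nat.find_spec hex
  have hmin : ∀ k < Nat.find hex, ¬ ∃ p : ℕ, θ = (p : ℝ) / 2 ^ k := fun k hk => Nat.find_min hex hk
  set m := Nat.find hex with hmdef
  clear_value m
  have hp1 : 1 ≤ p := by
    rcases Nat.eq_zero_or_pos p with h | h
    · subst h; simp at hp; linarith
    · exact h
  have hm1 : 1 ≤ m := by
    rcases Nat.eq_zero_or_pos m with h | h
    · subst h
      have : (1 : ℝ) ≤ p := by exact_mod_cast hp1
      simp at hp; linarith
    · exact h
  refine ⟨p, m, hp1, hm1, hp, ?_⟩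
  have hB : (1 : ℝ) < 2 ^ m := one_lt_pow₀ (by norm_num) (by omega)
  have hpθ : (p : ℝ) = θ * 2 ^ m := by rw [hp]; field_simp
  set φ : ℝ := (p : ℝ) / (2 ^ m - 1) with hφ
  have hφp : φ * 2 ^ m = φ + p := by
    have : φ * (2 ^ m - 1) = p := by rw [hφ]; exact div_mul_cancel₀ _ (by linarith)
    linarith
  have hφ0 : 0 < φ := by
    rw [hφ]; apply div_pos
    · exact_mod_cast hp1
    · linarith
  have hφ2 : φ ≤ 1/2 := by
    rw [hφ, div_le_iff₀ (by linarith)]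
    obtain ⟨c, rfl⟩ : ∃ c, m = c + 1 := ⟨m - 1, by omega⟩
    have h1 : (p : ℝ) < 2 ^ c := by
      rw [hpθ, pow_succ]
      have : (0:ℝ) < 2 ^ c := by positivity
      nlinarith
    have h2 : p < 2 ^ c := by exact_mod_cast h1
    have h3 : p + 1 ≤ 2 ^ c := h2
    have h4 : (p : ℝ) + 1 ≤ 2 ^ c := by exact_mod_cast h3
    rw [pow_succ]; linarith
  refine ⟨hφ0, hφ2, ?_⟩
  intro k
  induction k using Nat.strong_induction_on with
  | _ k ih =>
  rcases Nat.lt_or_ge k m with hkm | hkm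
  · obtain ⟨a, ha, hb⟩ := hk k
    refine ⟨a, ?_⟩
    obtain ⟨d, rfl⟩ : ∃ d, m = k + d := ⟨m - k, by omega⟩
    have hA : (1 : ℝ) ≤ 2 ^ k := one_le_pow₀ (by norm_num)
    have hD : (1 : ℝ) ≤ 2 ^ d := one_le_pow₀ (by norm_num)
    have hne : (2 : ℝ) ^ k * θ - a ≠ 1 := by
      intro h
      apply hmin k hkm
      have h1 : (0 : ℝ) < ((a + 1 : ℤ) : ℝ) := by
        push_cast
        have : (0 : ℝ) < 2 ^ k * θ := by positivity
        linarith
      have h2 : 0 < a + 1 := by exact_mod_cast h1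
      refine ⟨(a + 1).toNat, ?_⟩
      have h3 : (((a + 1).toNat : ℕ) : ℝ) = ((a + 1 : ℤ) : ℝ) := by
        exact_mod_cast congrArg (Int.cast (R := ℝ)) (Int.toNat_of_nonneg h2.le)
      rw [h3, eq_div_iff (by positivity)]
      push_cast; linarith
    have hb' : (2 : ℝ) ^ k * θ - a < 1 := lt_of_le_of_ne hb hne
    rw [pow_add] at hpθ hφp
    generalize (2 : ℝ) ^ k = A at *
    have hDi : (2 : ℝ) ^ d = ((2 ^ d : ℤ) : ℝ) := by push_cast; rfl
    have hj : (p : ℝ) - a * 2 ^ d + 1 ≤ 2 ^ d := by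
      have : (p : ℝ) - a * 2 ^ d < 2 ^ d := by rw [hpθ]; nlinarith
      have h2 : ((p : ℤ)) - a * 2 ^ d < 2 ^ d := by exact_mod_cast this
      have h3 : ((p : ℤ)) - a * 2 ^ d + 1 ≤ 2 ^ d := h2
      exact_mod_cast h3
    clear hDi
    clear_value φ
    generalize (2 : ℝ) ^ d = D at *
    have hDpos : 0 < D := by linarith
    have key : (A * φ - a) * D = p - a * D + φ := by linarith
    constructor
    · apply le_of_mul_le_mul_right _ hDpos
      rw [key]
      -- θ D ≤ p - a D
      have h1 : θ * D ≤ p - a * D := by rw [hpθ]; nlinarith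
      have h2 : θ * (A * D) = φ * (A * D) - φ := by linarith
      have h3 : A * (φ * D - θ * D) = φ := by linarith
      have h4 : 0 ≤ φ * D - θ * D := by
        by_contra hc
        push Not at hc
        nlinarith
      nlinarith
    · apply le_of_mul_le_mul_right _ hDpos
      rw [key]; linarith
  · obtain ⟨d, rfl⟩ : ∃ d, k = d + m := ⟨k - m, by omega⟩
    obtain ⟨a, ha, hb⟩ := ih d (by omega)
    refine ⟨a + 2 ^ d * p, ?_⟩
    have : (2 : ℝ) ^ (d + m) * φ = 2 ^ d * φ + 2 ^ d * p := by
      rw [pow_add]; linear_combination (2 : ℝ) ^ d * hφp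
    push_cast
    rw [this]
    constructor <;> linarith

theorem headXi_periodic_part (θ : ℝ) (hθ : θ ∈ HeadXi)
    (hex : ∃ n : ℕ, 1 ≤ n ∧ ∃ p : ℕ, θ = (p : ℝ) / (2 ^ n - 1)) :
    ∃ p n : ℕ, 1 ≤ p ∧ 1 ≤ n ∧ θ = (p : ℝ) / (2 ^ n - 1) ∧
        ((p : ℝ) / 2 ^ n) ∈ HeadXi := by
  classical
  obtain ⟨h0, hle, hk⟩ := hθ
  obtain ⟨hn1, p, hp⟩ := Nat.find_spec hex
  have hmin : ∀ k < Nat.find hex, ¬ (1 ≤ k ∧ ∃ p : ℕ, θ = (p : ℝ) / (2 ^ k - 1)) :=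
    fun k hk => Nat.find_min hex hk
  set n := Nat.find hex with hndef
  clear_value n
  have hp1 : 1 ≤ p := by
    rcases Nat.eq_zero_or_pos p with h | h
    · subst h; simp at hp; linarith
    · exact h
  refine ⟨p, n, hp1, hn1, hp, ?_⟩
  have hB : (1 : ℝ) < 2 ^ n := one_lt_pow₀ (by norm_num) (by omega)
  have hpθ : θ * 2 ^ n = θ + p := by
    have : θ * (2 ^ n - 1) = p := by rw [hp]; exact div_mul_cancel₀ _ (by linarith)
    linarith
  have hpp : (0 : ℝ) < p := by exact_mod_cast hp1
  set ψ : ℝ := (p : ℝ) / 2 ^ n with hψ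
  have hψp : ψ * 2 ^ n = p := by rw [hψ]; field_simp
  have hψ0 : 0 < ψ := by rw [hψ]; positivity
  have hψθ : ψ ≤ θ := by
    apply le_of_mul_le_mul_right _ (by linarith : (0 : ℝ) < 2 ^ n)
    linarith
  refine ⟨hψ0, by linarith, ?_⟩
  intro k
  rcases Nat.eq_zero_or_pos k with rfl | hkpos
  · exact ⟨0, by simp, by simp; linarith⟩
  rcases Nat.lt_or_ge k n with hkn | hkn
  · obtain ⟨a, ha, hb⟩ := hk k
    refine ⟨a, ?_⟩
    obtain ⟨d, rfl⟩ : ∃ d, n = k + d := ⟨n - k, by omega⟩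
    obtain ⟨b, hb1, hb2⟩ := hk d
    have hA : (1 : ℝ) < 2 ^ k := one_lt_pow₀ (by norm_num) (by omega)
    have hD : (1 : ℝ) ≤ 2 ^ d := one_le_pow₀ (by norm_num)
    have hne : θ ≠ (2 : ℝ) ^ k * θ - a := by
      intro h
      apply hmin k hkn
      refine ⟨hkpos, a.toNat, ?_⟩
      have h1 : (0 : ℝ) < (a : ℝ) := by nlinarith
      have h2 : 0 < a := by exact_mod_cast h1
      have h3 : ((a.toNat : ℕ) : ℝ) = (a : ℝ) := by
        exact_mod_cast congrArg (Int.cast (R := ℝ)) (Int.toNat_of_nonneg h2.le)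
      rw [h3, eq_div_iff (by linarith)]
      linarith
    have ha' : θ < (2 : ℝ) ^ k * θ - a := lt_of_le_of_ne ha hne
    rw [pow_add] at hpθ hψp
    have hj : (b : ℝ) + 1 ≤ p - a * 2 ^ d := by
      have h1 : (b : ℝ) < p - a * 2 ^ d := by
        have : θ * 2 ^ d < (2 ^ k * θ - a) * 2 ^ d :=
          mul_lt_mul_of_pos_right ha' (by linarith)
        nlinarith
      have h2 : b < (p : ℤ) - a * 2 ^ d := by exact_mod_cast h1
      have h3 : b + 1 ≤ (p : ℤ) - a * 2 ^ d := h2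
      exact_mod_cast h3
    have hDpos : (0 : ℝ) < 2 ^ d := by linarith
    have key : (2 ^ k * ψ - a) * 2 ^ d = p - a * 2 ^ d := by linarith
    constructor
    · apply le_of_mul_le_mul_right _ hDpos
      rw [key]
      have : ψ * 2 ^ d ≤ θ * 2 ^ d := mul_le_mul_of_nonneg_right hψθ hDpos.le
      linarith
    · have : (2 : ℝ) ^ k * ψ ≤ 2 ^ k * θ := mul_le_mul_of_nonneg_left hψθ (by linarith)
      linarith
  · obtain ⟨d, rfl⟩ : ∃ d, k = d + n := ⟨k - n, by omega⟩
    refine ⟨2 ^ d * p - 1, ?_⟩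
    have : (2 : ℝ) ^ (d + n) * ψ = 2 ^ d * p := by
      rw [pow_add]; linear_combination (2 : ℝ) ^ d * hψp
    push_cast
    rw [this]
    constructor <;> linarith

/-- (i) A dyadic `θ = p/2^m ∈ Ξ` with `θ < 1/2` is the infimum of a connected component
`(p/2^m, p/(2^m - 1))` of `(0, 1/2) ∖ Ξ` whose supremum `p/(2^m - 1)` lies in `Ξ`.
(ii) A rational `θ = q/(2^r - 1) ∈ Ξ` is the supremum of a connected component
`(p/2ⁿ, p/(2ⁿ - 1))` of `(0, 1/2) ∖ Ξ` whose infimum `p/2ⁿ` lies in `Ξ`. -/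
theorem headXi_dyadic_and_periodic_endpoints :
    (∀ θ ∈ HeadXi, θ < 1/2 →
      (∃ p m : ℕ, 1 ≤ p ∧ 1 ≤ m ∧ θ = (p : ℝ) / 2 ^ m) →
      ∃ p m : ℕ, 1 ≤ p ∧ 1 ≤ m ∧ θ = (p : ℝ) / 2 ^ m ∧
        ((p : ℝ) / (2 ^ m - 1)) ∈ HeadXi ∧
        Set.Ioo ((p : ℝ) / 2 ^ m) ((p : ℝ) / (2 ^ m - 1)) ∩ HeadXi = ∅) ∧
    (∀ θ ∈ HeadXi,
      (∃ q r : ℕ, 1 ≤ q ∧ 1 ≤ r ∧ θ = (q : ℝ) / (2 ^ r - 1)) →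
      ∃ p n : ℕ, 1 ≤ p ∧ 1 ≤ n ∧ θ = (p : ℝ) / (2 ^ n - 1) ∧
        ((p : ℝ) / 2 ^ n) ∈ HeadXi ∧
        Set.Ioo ((p : ℝ) / 2 ^ n) ((p : ℝ) / (2 ^ n - 1)) ∩ HeadXi = ∅) := by
  constructor
  · rintro θ hθ hlt ⟨q, r, -, -, h⟩
    obtain ⟨p, m, h1, h2, h3, h4⟩ := headXi_dyadic_part θ hθ hlt ⟨r, q, h⟩
    exact ⟨p, m, h1, h2, h3, h4, headXi_gap p m h2⟩
  · rintro θ hθ ⟨q, r, -, hr, h⟩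
    obtain ⟨p, m, h1, h2, h3, h4⟩ := headXi_periodic_part θ hθ ⟨r, hr, q, h⟩
    exact ⟨p, m, h1, h2, h3, h4, headXi_gap p m h2⟩
end

section
/- For every θ ∈ Ξ, θ belongs to Θ_per ∪ Θ_dya if and only if θ = 1/2 or θ is a one-sided isolated point of Ξ, i.e. there exists δ > 0 such that (θ, θ + δ) ∩ Ξ = ∅ or (θ − δ, θ) ∩ Ξ = ∅. (Equivalently: the set ∂(Ξ) consisting of the endpoints of the connected components of (0, 1/2) ∖ Ξ together with the point 1/2 equals (Ξ ∩ Θ_per) ∪ (Ξ ∩ Θ_dya).) -/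
/-- The angles in `(0, 1/2]` periodic under the doubling map. -/
def ThetaPer : Set ℝ :=
  {t : ℝ | 0 < t ∧ t ≤ 1/2 ∧ ∃ k : ℕ, 1 ≤ k ∧ ∃ n : ℤ, 2 ^ k * t - t = n}

/-- The dyadic angles in `(0, 1/2]` (eventually mapped to `0 ≡ 1` by doubling). -/
def ThetaDya : Set ℝ :=
  {t : ℝ | 0 < t ∧ t ≤ 1/2 ∧ ∃ k : ℕ, 1 ≤ k ∧ ∃ n : ℤ, 2 ^ k * t = n}

theorem headXi_right {θ : ℝ} (hθ : θ ∈ HeadXi) (hd : θ ∉ ThetaDya) (δ : ℝ) (hδ : 0 < δ) :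
    ∃ t ∈ HeadXi, θ < t ∧ t < θ + δ := by
  obtain ⟨h0, h1, h2⟩ := hθ
  have hnd : ∀ k : ℕ, ∀ n : ℤ, (2:ℝ) ^ (k+1) * θ ≠ n := fun k n h =>
    hd ⟨h0, h1, k+1, by omega, n, h⟩
  obtain ⟨N, hN⟩ := exists_pow_lt_of_lt_one hδ (by norm_num : (1/2 : ℝ) < 1)
  have hP : (0:ℝ) < 2 ^ (N+1) := by positivity
  have hPN : (0:ℝ) < 2 ^ N := by positivity
  have hsm : 1 < δ * 2 ^ (N+1) := by
    rw [one_div, inv_pow, inv_lt_iff_one_lt_mul₀ hPN] at hN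
    rw [pow_succ]; nlinarith
  set F : ℤ := ⌊(2:ℝ)^(N+1) * θ⌋ with hF
  have hF1 : (F:ℝ) ≤ 2^(N+1) * θ := Int.floor_le _
  have hF2 : (2:ℝ)^(N+1) * θ < F + 1 := Int.lt_floor_add_one _
  have hlt : (2:ℝ)^(N+1) * θ ≠ F := hnd N F
  have hmul : (2:ℝ)^(N+1) * (((F:ℝ)+1) / 2^(N+1)) = F + 1 := by field_simp
  have hgt : θ < ((F:ℝ)+1) / 2^(N+1) := by
    rw [lt_div_iff₀ hP]; linarith
  refine ⟨((F:ℝ)+1) / 2^(N+1), ⟨lt_trans h0 hgt, ?_, ?_⟩, hgt, ?_⟩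
  · have h3 : (F:ℝ) < 2 ^ N := by
      refine lt_of_lt_of_le (lt_of_le_of_ne hF1 (Ne.symm hlt)) ?_
      rw [pow_succ]; nlinarith
    have h4 : F < 2 ^ N := by exact_mod_cast h3
    have h5 : (F:ℝ) + 1 ≤ 2 ^ N := by exact_mod_cast h4
    rw [div_le_iff₀ hP, pow_succ]; linarith
  · intro k
    rcases Nat.lt_or_ge k (N+1) with hk | hk
    · obtain ⟨n, hn1, hn2⟩ := h2 k
      refine ⟨n, ?_, ?_⟩
      · skip
        have e : (2:ℝ)^(N+1) * (2^k * (((F:ℝ)+1) / 2^(N+1)) - n)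
            = 2^k * (F+1) - 2^(N+1) * n := by field_simp
        have h6 : (F:ℝ) < 2^k * (F+1) - 2^(N+1) * n := by
          have : (2:ℝ)^k * (2^(N+1) * θ) < 2^k * (F+1) := by gcongr
          have : (2:ℝ)^(N+1) * θ ≤ 2^(N+1) * (2 ^ k * θ - n) := by gcongr
          nlinarith
        have h7 : F < 2^k * (F+1) - 2^(N+1) * n := by exact_mod_cast h6
        have h8 : (F:ℝ) + 1 ≤ 2^k * (F+1) - 2^(N+1) * n := by exact_mod_cast h7
        rw [div_le_iff₀ hP, mul_comm, e]; exact h8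
      · obtain ⟨d, hd⟩ := Nat.exists_eq_add_of_le hk.le
        have h9 : (2:ℝ) ^ k * θ < n + 1 := by
          refine lt_of_le_of_ne (by linarith) ?_
          intro h
          apply hnd k (2 * (n+1))
          push_cast; rw [pow_succ]; linarith
        have hpe : (2:ℝ)^(N+1) = 2^k * 2^d := by rw [hd, pow_add]
        have hkp : (0:ℝ) < 2^k := by positivity
        have hdp : (0:ℝ) < 2^d := by positivity
        have h10 : (F:ℝ) < 2^d * (n+1) := by
          have : (2:ℝ)^d * (2 ^ k * θ) < 2^d * (n + 1) := by gcongr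
          rw [hpe] at hF1; nlinarith
        have h11 : F < 2^d * (n+1) := by exact_mod_cast h10
        have h12 : (F:ℝ) + 1 ≤ 2^d * (n+1) := by exact_mod_cast h11
        have e : (2:ℝ)^k * (((F:ℝ)+1) / 2^(N+1)) = (F+1) / 2^d := by
          rw [hpe]; field_simp
        rw [e, sub_le_iff_le_add, div_le_iff₀ hdp]; linarith
    · obtain ⟨d, rfl⟩ := Nat.exists_eq_add_of_le hk
      refine ⟨2^d * (F+1) - 1, ?_, ?_⟩
      all_goals
        have e : (2:ℝ)^(N+1+d) * (((F:ℝ)+1) / 2^(N+1)) = 2^d * (F+1) := by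
          rw [pow_add]; field_simp
        rw [e]; push_cast
      · have h3 : (F:ℝ) < 2 ^ (N+1) := by
          refine lt_of_le_of_lt hF1 ?_
          nlinarith
        have h4 : F < 2 ^ (N+1) := by exact_mod_cast h3
        have h5 : (F:ℝ) + 1 ≤ 2 ^ (N+1) := by exact_mod_cast h4
        rw [div_le_iff₀ hP]; linarith
      · linarith
  · rw [div_lt_iff₀ hP]; linarith

theorem headXi_left {θ : ℝ} (hθ : θ ∈ HeadXi) (hd : θ ∉ ThetaPer) (δ : ℝ) (hδ : 0 < δ) :
    ∃ t ∈ HeadXi, θ - δ < t ∧ t < θ := by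
  obtain ⟨h0, h1, h2⟩ := hθ
  have hnd : ∀ k : ℕ, 1 ≤ k → ∀ n : ℤ, (2:ℝ) ^ k * θ - θ ≠ n := fun k hk n h =>
    hd ⟨h0, h1, k, hk, n, h⟩
  have hpos : ∀ k : ℕ, 1 ≤ k → (0:ℝ) < 2^k - 1 := fun k hk => by
    have := one_lt_pow₀ (by norm_num : (1:ℝ) < 2) (by omega : k ≠ 0)
    linarith
  let f : ℕ → ℝ := fun k => (⌊((2:ℝ)^k - 1) * θ⌋ : ℝ) / (2^k - 1)
  have hfle : ∀ k : ℕ, 1 ≤ k → f k < θ := by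
    intro k hk
    have hp := hpos k hk
    show _ / _ < _
    rw [div_lt_iff₀ hp]
    refine lt_of_le_of_ne (by linarith [Int.floor_le (((2:ℝ)^k - 1) * θ)]) ?_
    intro h
    exact hnd k hk _ (by rw [h]; ring)
  have hε : 0 < min δ θ := lt_min hδ h0
  obtain ⟨K, hK⟩ := exists_pow_lt_of_lt_one hε (by norm_num : (1/2 : ℝ) < 1)
  have hPK : (0:ℝ) < 2 ^ K := by positivity
  have hK1 : (1:ℝ) ≤ 2 ^ K := one_le_pow₀ (by norm_num)
  rw [one_div, inv_pow, inv_lt_iff_one_lt_mul₀ hPK] at hK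
  obtain ⟨N, hNm, hNmax⟩ := Finset.exists_max_image (Finset.Icc 1 (K+1)) f ⟨1, by simp⟩
  rw [Finset.mem_Icc] at hNm
  have hclose : θ - min δ θ < f N := by
    refine lt_of_lt_of_le ?_ (hNmax (K+1) (by simp))
    have hp := hpos (K+1) (by omega)
    show _ < _ / _
    rw [lt_div_iff₀ hp]
    have h3 := Int.lt_floor_add_one (((2:ℝ)^(K+1) - 1) * θ)
    have h4 : 1 < min δ θ * (2^(K+1) - 1) := by
      rw [pow_succ]; nlinarith
    linarith
  have hft : 0 < f N := by linarith [min_le_right δ θ]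
  have hfl := hfle N hNm.1
  have hper : (2:ℝ)^N * f N = f N + ⌊((2:ℝ)^N - 1) * θ⌋ := by
    have hp := hpos N hNm.1
    have : f N * (2^N - 1) = ⌊((2:ℝ)^N - 1) * θ⌋ := div_mul_cancel₀ _ hp.ne'
    linarith
  refine ⟨f N, ⟨hft, by linarith, ?_⟩, by linarith [min_le_left δ θ], hfl⟩
  intro k
  induction k using Nat.strong_induction_on with
  | _ k ih =>
    rcases Nat.lt_or_ge k N with hk | hk
    · rcases Nat.eq_zero_or_pos k with rfl | hk0
      · exact ⟨0, by simp, by simp; linarith⟩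
      · obtain ⟨n, hn1, hn2⟩ := h2 k
        refine ⟨n, ?_, ?_⟩
        · by_contra hcon
          push Not at hcon
          have hp := hpos k hk0
          have h3 : n ≤ ⌊((2:ℝ)^k - 1) * θ⌋ := Int.le_floor.mpr (by linarith)
          have h4 : (n:ℝ) ≤ ⌊((2:ℝ)^k - 1) * θ⌋ := by exact_mod_cast h3
          have h5 := hNmax k (by rw [Finset.mem_Icc]; omega)
          have h6 : f k * (2^k - 1) = ⌊((2:ℝ)^k - 1) * θ⌋ := div_mul_cancel₀ _ hp.ne'
          nlinarith
        · have : (2:ℝ)^k * f N ≤ 2^k * θ := by gcongr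
          linarith
    · obtain ⟨d, rfl⟩ := Nat.exists_eq_add_of_le hk
      obtain ⟨n, hn1, hn2⟩ := ih d (by omega)
      have e : (2:ℝ)^(N+d) * f N - ((n + 2^d * ⌊((2:ℝ)^N - 1) * θ⌋ : ℤ) : ℝ) = 2^d * f N - n := by
        rw [pow_add, mul_right_comm, hper]; push_cast; ring
      exact ⟨n + 2^d * ⌊((2:ℝ)^N - 1) * θ⌋, by rw [e]; exact hn1, by rw [e]; exact hn2⟩

/-- no integer translate of `y + n`, `0 < y < t ≤ 1/2`, lies in `[t, 1]` -/
theorem headXi_excl {x y t : ℝ} {n : ℤ} (hx : x = y + n) (hy : 0 < y) (hyt : y < t)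
    (h : ∃ m : ℤ, t ≤ x - m ∧ x - m ≤ 1) : False := by
  obtain ⟨m, h1, h2⟩ := h
  have h3 : (m:ℝ) < n := by linarith
  have h4 : m < n := by exact_mod_cast h3
  have h5 : (m:ℝ) + 1 ≤ n := by exact_mod_cast h4
  linarith

/-- For `θ ∈ Ξ`: `θ ∈ Θ_per ∪ Θ_dya` iff `θ = 1/2` or `θ` is a one-sided isolated
point of `Ξ`. -/
theorem headXi_boundary_characterization (θ : ℝ) (hθ : θ ∈ HeadXi) :
    θ ∈ ThetaPer ∪ ThetaDya ↔
      θ = 1/2 ∨ ∃ δ > 0, Set.Ioo θ (θ + δ) ∩ HeadXi = ∅ ∨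
        Set.Ioo (θ - δ) θ ∩ HeadXi = ∅ := by
  constructor
  · rintro (⟨h0, h1, k, hk, n, hn⟩ | ⟨h0, h1, k, hk, n, hn⟩)
    · right
      have hp : (0:ℝ) < 2^k := by positivity
      have hp1 := one_lt_pow₀ (by norm_num : (1:ℝ) < 2) (by omega : k ≠ 0)
      refine ⟨θ / 2^k, by positivity, Or.inr ?_⟩
      rw [Set.eq_empty_iff_forall_notMem]
      rintro t ⟨⟨ht1, ht2⟩, _, _, ht⟩
      have h3 : (θ - t) * 2^k < θ := by rw [← lt_div_iff₀ hp]; linarith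
      exact headXi_excl (x := 2^k * t) (y := θ - (θ - t) * 2^k) (t := t) (n := n)
        (by rw [← hn]; ring) (by linarith) (by nlinarith) (ht k)
    · right
      have hp : (0:ℝ) < 2^k := by positivity
      refine ⟨θ / 2^k, by positivity, Or.inl ?_⟩
      rw [Set.eq_empty_iff_forall_notMem]
      rintro t ⟨⟨ht1, ht2⟩, _, _, ht⟩
      have h3 : (t - θ) * 2^k < θ := by rw [← lt_div_iff₀ hp]; linarith
      exact headXi_excl (x := 2^k * t) (y := (t - θ) * 2^k) (t := t) (n := n)
        (by rw [← hn]; ring) (mul_pos (by linarith) hp) (by linarith) (ht k)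
  · rintro (rfl | ⟨δ, hδ, h | h⟩)
    · exact Or.inr ⟨by norm_num, le_refl _, 1, le_refl _, 1, by norm_num⟩
    · right
      by_contra hc
      obtain ⟨t, ht, h1, h2⟩ := headXi_right hθ hc δ hδ
      exact (Set.eq_empty_iff_forall_notMem.mp h) t ⟨⟨h1, h2⟩, ht⟩
    · left
      by_contra hc
      obtain ⟨t, ht, h1, h2⟩ := headXi_left hθ hc δ hδ
      exact (Set.eq_empty_iff_forall_notMem.mp h) t ⟨⟨h1, h2⟩, ht⟩
end

section
/- Let α ∈ Ξ be a dyadic rational, i.e. 2^k·α ∈ ℤ for some integer k ≥ 1. Then α ∈ C_α and α is an isolated point of C_α: there exists δ > 0 such that the open interval (α, α + δ) is disjoint from C_α. (Note that C_α ⊆ [α, 1], so no points of C_α lie below α.) -/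
/-- `C_α`: the set of `t ∈ (0, 1]` with `2^k t ∈ [α, 1] (mod ℤ)` for all `k ≥ 0`. -/
def CSet (α : ℝ) : Set ℝ :=
  {t : ℝ | 0 < t ∧ t ≤ 1 ∧ ∀ k : ℕ, ∃ n : ℤ, α ≤ 2 ^ k * t - n ∧ 2 ^ k * t - n ≤ 1}

/-- If `α ∈ Ξ` is dyadic then `α ∈ C_α` and `α` is an isolated point of `C_α`:
some interval `(α, α + δ)` is disjoint from `C_α`. -/
theorem dyadic_isolated_in_CSet (α : ℝ) (hα : α ∈ HeadXi)
    (hdya : ∃ k : ℕ, 1 ≤ k ∧ ∃ n : ℤ, 2 ^ k * α = n) :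
    α ∈ CSet α ∧ ∃ δ > 0, Set.Ioo α (α + δ) ∩ CSet α = ∅ := by
  obtain ⟨h0, h1, h2⟩ := hα
  obtain ⟨k, _, n, hn⟩ := hdya
  refine ⟨⟨h0, by linarith, h2⟩, α / 2 ^ k, by positivity, ?_⟩
  rw [Set.eq_empty_iff_forall_notMem]
  rintro t ⟨⟨ht1, ht2⟩, _, _, ht⟩
  obtain ⟨m, hm1, hm2⟩ := ht k
  have hp : (0 : ℝ) < 2 ^ k := by positivity
  have hu : 2 ^ k * α < 2 ^ k * t := mul_lt_mul_of_pos_left ht1 hp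
  have hv : 2 ^ k * t < 2 ^ k * (α + α / 2 ^ k) := mul_lt_mul_of_pos_left ht2 hp
  have he : 2 ^ k * (α + α / 2 ^ k) = 2 ^ k * α + α := by field_simp
  rw [he] at hv
  rw [hn] at hu hv
  have a1 : (m : ℝ) < n := by linarith
  have a2 : (n : ℝ) < m + 1 := by linarith
  have b1 : m < n := by exact_mod_cast a1
  have b2 : n < m + 1 := by exact_mod_cast a2
  omega
end

section
/- Let α ∈ Ξ be non-dyadic, i.e. 2^k·α ∉ ℤ for every integer k ≥ 1. Then for every ε > 0 there exist t, t′ ∈ C_α with α < t < α + ε and α < t′ < α + ε such that t = p/(2^q − 1) for some integers p, q ≥ 1 and t′ = p′/2^{q′} for some integers p′, q′ ≥ 1. In particular, α is an accumulation point both of the non-dyadic rational numbers and of the dyadic rational numbers in C_α. -/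
/-- A non-dyadic `α ∈ Ξ` is an accumulation point both of the non-dyadic rationals
`p/(2^q - 1)` and of the dyadic rationals `p'/2^{q'}` in `C_α`. -/
theorem nondyadic_accumulation_in_CSet (α : ℝ) (hα : α ∈ HeadXi)
    (hnd : ∀ k : ℕ, 1 ≤ k → ∀ n : ℤ, 2 ^ k * α ≠ n) :
    ∀ ε > 0, ∃ t t' : ℝ, t ∈ CSet α ∧ t' ∈ CSet α ∧
      α < t ∧ t < α + ε ∧ α < t' ∧ t' < α + ε ∧
      (∃ p q : ℕ, 1 ≤ p ∧ 1 ≤ q ∧ t = (p : ℝ) / (2 ^ q - 1)) ∧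
      (∃ p' q' : ℕ, 1 ≤ p' ∧ 1 ≤ q' ∧ t' = (p' : ℝ) / 2 ^ q') := by
  intro ε hε
  obtain ⟨h0, h1, h2⟩ := hα
  have key : ∀ k : ℕ, ∃ n : ℤ, α ≤ 2 ^ k * α - n ∧ 2 ^ k * α - n < 1 := by
    intro k
    obtain ⟨n, ha, hb⟩ := h2 k
    refine ⟨n, ha, lt_of_le_of_ne hb ?_⟩
    intro h
    apply hnd (k + 1) (by omega) (2 * (n + 1))
    push_cast
    rw [pow_succ]
    linarith
  choose n hn1 hn2 using key
  have nonneg : ∀ k, 0 ≤ n k := by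
    intro k
    have hp : (0 : ℝ) < 2 ^ k * α := by positivity
    have : (-1 : ℝ) < n k := by linarith [hn2 k]
    have : (-1 : ℤ) < n k := by exact_mod_cast this
    omega
  -- comparison of truncations
  have cmp : ∀ k j : ℕ, n (k + j) + 1 ≤ 2 ^ j * (n k + 1) := by
    intro k j
    have a1 : (n (k + j) : ℝ) < 2 ^ (k + j) * α := by linarith [hn1 (k + j)]
    have a2 : (2 : ℝ) ^ j * (2 ^ k * α) < 2 ^ j * (n k + 1) :=
      mul_lt_mul_of_pos_left (by linarith [hn2 k]) (by positivity)
    have a3 : (n (k + j) : ℝ) < 2 ^ j * (n k + 1) := by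
      rw [pow_add] at a1
      linarith
    have a4 : n (k + j) < 2 ^ j * (n k + 1) := by exact_mod_cast a3
    omega
  have cmp' : ∀ k j : ℕ, (n (k + j) + 1 : ℝ) ≤ 2 ^ j * (n k + 1) := by
    intro k j
    exact_mod_cast cmp k j
  have n0 : n 0 = 0 := by
    have a1 : (n 0 : ℝ) < 1 := by
      have := hn1 0
      rw [pow_zero] at this
      linarith
    have a2 : n 0 < 1 := by exact_mod_cast a1
    have := nonneg 0
    omega
  have top : ∀ k, (n k + 1 : ℝ) ≤ 2 ^ k := by
    intro k
    have := cmp' 0 k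
    simpa [n0] using this
  obtain ⟨M, hM⟩ : ∃ M : ℕ, 2 / ε < 2 ^ M := pow_unbounded_of_one_lt _ (by norm_num)
  rw [div_lt_iff₀ hε] at hM
  -- a zero digit far out
  obtain ⟨m, hmM, hm⟩ : ∃ m, M ≤ m ∧ 2 ^ m * α - n m < 1 / 2 := by
    by_contra! hc
    have dbl : ∀ j : ℕ, n (M + j) + 1 - 2 ^ (M + j) * α = 2 ^ j * (n M + 1 - 2 ^ M * α) := by
      intro j
      induction j with
      | zero => simp
      | succ j ih =>
        have b1 := hc (M + j) (by omega)
        have b2 := hn1 (M + (j + 1))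
        have b3 := hn2 (M + (j + 1))
        have b4 := hn2 (M + j)
        have e : (2 : ℝ) ^ (M + (j + 1)) = 2 * 2 ^ (M + j) := by rw [← add_assoc, pow_succ]; ring
        rw [e] at b2 b3 ⊢
        have c1 : (2 * n (M + j) : ℝ) < n (M + (j + 1)) := by linarith
        have c2 : (n (M + (j + 1)) : ℝ) < 2 * n (M + j) + 2 := by linarith
        have c1' : 2 * n (M + j) < n (M + (j + 1)) := by exact_mod_cast c1
        have c2' : n (M + (j + 1)) < 2 * n (M + j) + 2 := by exact_mod_cast c2
        have c3 : n (M + (j + 1)) = 2 * n (M + j) + 1 := by omega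
        rw [c3, pow_succ]
        push_cast
        linarith
    have dpos : 0 < n M + 1 - 2 ^ M * α := by linarith [hn2 M]
    obtain ⟨j, hj⟩ : ∃ j : ℕ, 1 / (n M + 1 - 2 ^ M * α) < 2 ^ j :=
      pow_unbounded_of_one_lt _ (by norm_num)
    rw [div_lt_iff₀ dpos, ← dbl j] at hj
    linarith [hn1 (M + j)]
  have hpow : (2 : ℝ) ^ M ≤ 2 ^ m := pow_le_pow_right₀ (by norm_num) hmM
  have hmε : 2 < 2 ^ m * ε := lt_of_lt_of_le hM (mul_le_mul_of_nonneg_right hpow hε.le)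
  have hm1 : (1 : ℝ) ≤ 2 ^ m := one_le_pow₀ (by norm_num)
  have hP : (0 : ℝ) < 2 ^ m := by positivity
  have hD : (0 : ℝ) < 2 ^ (m + 1) - 1 := by rw [pow_succ]; linarith
  have hnm : (0 : ℝ) ≤ n m := by exact_mod_cast nonneg m
  obtain ⟨t, ht⟩ : ∃ t : ℝ, t = (2 * n m + 1) / (2 ^ (m + 1) - 1) := ⟨_, rfl⟩
  have hteq : 2 ^ (m + 1) * t = 2 * n m + 1 + t := by
    have : t * (2 ^ (m + 1) - 1) = 2 * n m + 1 := by rw [ht]; field_simp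
    linarith
  have hαt : α < t := by
    rw [ht, lt_div_iff₀ hD, pow_succ]
    linarith
  have ht1 : t ≤ 1 := by
    rw [ht, div_le_one hD, pow_succ]
    linarith [top m]
  have htε : t < α + ε := by
    rw [ht, div_lt_iff₀ hD, pow_succ]
    have := hn1 m
    nlinarith
  obtain ⟨s, hs⟩ : ∃ s : ℝ, s = (n m + 1) / 2 ^ (m + 1 - 1) := ⟨_, rfl⟩
  simp only [Nat.add_sub_cancel] at hs
  have hseq : 2 ^ m * s = n m + 1 := by rw [hs]; field_simp
  have hαs : α < s := by
    rw [hs, lt_div_iff₀ hP]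
    linarith [hn2 m]
  have hs1 : s ≤ 1 := by
    rw [hs, div_le_one hP]
    exact top m
  have hsε : s < α + ε := by
    rw [hs, div_lt_iff₀ hP]
    linarith [hn1 m]
  refine ⟨t, s, ⟨by linarith, ht1, ?_⟩, ⟨by linarith, hs1, ?_⟩, hαt, htε, hαs, hsε,
    ⟨(2 * n m + 1).toNat, m + 1, ?_, by omega, ?_⟩, ⟨(2 * (n m + 1)).toNat, m + 1, ?_, by omega, ?_⟩⟩
  · intro k
    induction k using Nat.strong_induction_on with
    | _ k ih =>
    rcases Nat.lt_or_ge m k with hk | hk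
    · obtain ⟨j, rfl⟩ := Nat.exists_eq_add_of_le (Nat.succ_le_of_lt hk)
      obtain ⟨a, ha, hb⟩ := ih j (by omega)
      refine ⟨a + 2 ^ j * (2 * n m + 1), ?_⟩
      have e : (2 : ℝ) ^ (m.succ + j) * t = 2 ^ j * t + 2 ^ j * (2 * n m + 1) := by
        rw [pow_add, mul_right_comm, Nat.succ_eq_add_one, hteq]; ring
      rw [e]
      push_cast
      constructor <;> linarith
    · obtain ⟨j, rfl⟩ := Nat.exists_eq_add_of_le hk
      refine ⟨n k, ?_, ?_⟩
      · have : (2 : ℝ) ^ k * α ≤ 2 ^ k * t := mul_le_mul_of_nonneg_left hαt.le (by positivity)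
        linarith [hn1 k]
      · have c := cmp' k j
        have hJ : (0 : ℝ) < 2 ^ j := by positivity
        have e : (2 : ℝ) ^ j * (2 ^ k * t) ≤ 2 ^ j * (n k + 1) := by
          rw [pow_succ, pow_add] at hteq
          linarith
        linarith [le_of_mul_le_mul_left e hJ]
  · intro k
    rcases Nat.le_total m k with hk | hk
    · obtain ⟨j, rfl⟩ := Nat.exists_eq_add_of_le hk
      refine ⟨2 ^ j * (n m + 1) - 1, ?_⟩
      have e : (2 : ℝ) ^ (m + j) * s = 2 ^ j * (n m + 1) := by
        rw [pow_add, mul_right_comm, hseq]; ring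
      rw [e]
      push_cast
      constructor <;> linarith
    · obtain ⟨j, rfl⟩ := Nat.exists_eq_add_of_le hk
      refine ⟨n k, ?_, ?_⟩
      · have : (2 : ℝ) ^ k * α ≤ 2 ^ k * s := mul_le_mul_of_nonneg_left hαs.le (by positivity)
        linarith [hn1 k]
      · have c := cmp' k j
        have hJ : (0 : ℝ) < 2 ^ j := by positivity
        have e : (2 : ℝ) ^ j * (2 ^ k * s) ≤ 2 ^ j * (n k + 1) := by
          rw [pow_add] at hseq
          linarith
        linarith [le_of_mul_le_mul_left e hJ]
  · have := nonneg m
    omega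
  · have e : (((2 * n m + 1).toNat : ℤ) : ℝ) = ((2 * n m + 1 : ℤ) : ℝ) := by
      rw [Int.toNat_of_nonneg (by have := nonneg m; omega)]
    rw [Int.cast_natCast] at e
    rw [e, ht]
    push_cast
    rfl
  · have := nonneg m
    omega
  · have e : (((2 * (n m + 1)).toNat : ℤ) : ℝ) = ((2 * (n m + 1) : ℤ) : ℝ) := by
      rw [Int.toNat_of_nonneg (by have := nonneg m; omega)]
    rw [Int.cast_natCast] at e
    rw [e, hs, pow_succ]
    push_cast
    field_simp
end

section
/- Every point of Ξ ∪ {0} is an accumulation point of (Ξ ∩ Θ_per) ∪ (Ξ ∩ Θ_dya): for every θ ∈ Ξ ∪ {0} and every ε > 0 there exists t ∈ Ξ with t ∈ Θ_per ∪ Θ_dya and 0 < |t − θ| < ε. -/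
/-- A dyadic number above `θ` lies in `Ξ` once its first shifts are controlled. -/
theorem dya_mem (t : ℝ) (m : ℕ) (N : ℤ) (h0 : 0 < t) (h1 : t ≤ 1/2) (hN : 2 ^ m * t = N)
    (h : ∀ k < m, ∃ n : ℤ, t ≤ 2 ^ k * t - n ∧ 2 ^ k * t - n ≤ 1) : t ∈ HeadXi := by
  refine ⟨h0, h1, fun k => ?_⟩
  rcases lt_or_ge k m with hk | hk
  · exact h k hk
  · obtain ⟨d, rfl⟩ := Nat.exists_eq_add_of_le hk
    refine ⟨2 ^ d * N - 1, ?_⟩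
    have : (2:ℝ) ^ (m + d) * t = 2 ^ d * N := by rw [← hN]; ring
    rw [this]
    push_cast
    constructor <;> linarith

theorem headXi_zero (ε : ℝ) (hε : 0 < ε) : ∃ t ∈ HeadXi, t ∈ ThetaPer ∪ ThetaDya ∧
      0 < |t - 0| ∧ |t - 0| < ε := by
  obtain ⟨m, hm⟩ := exists_pow_lt_of_lt_one hε (by norm_num : (1/2 : ℝ) < 1)
  have hp : (0:ℝ) < (1/2) ^ (m+1) := by positivity
  have hle : ((1:ℝ)/2) ^ (m+1) ≤ 1/2 := by
    have : ((1:ℝ)/2) ^ m ≤ 1 := pow_le_one₀ (by norm_num) (by norm_num)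
    rw [pow_succ]; linarith
  have hN : (2:ℝ) ^ (m+1) * (1/2) ^ (m+1) = ((1:ℤ) : ℝ) := by
    rw [← mul_pow]; norm_num
  refine ⟨(1/2) ^ (m+1), dya_mem _ (m+1) 1 hp hle hN ?_, Or.inr ⟨hp, hle, m+1, by omega, 1, hN⟩,
    ?_, ?_⟩
  · intro k hk
    refine ⟨0, ?_, ?_⟩
    · have : (1:ℝ) ≤ 2 ^ k := one_le_pow₀ (by norm_num)
      push_cast
      nlinarith
    · have : (2:ℝ) ^ k ≤ 2 ^ (m+1) := pow_le_pow_right₀ (by norm_num) hk.le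
      push_cast at hN ⊢
      nlinarith
  · rw [sub_zero, abs_of_pos hp]; exact hp
  · rw [sub_zero, abs_of_pos hp, pow_succ]
    have : (0:ℝ) < (1/2)^m := by positivity
    linarith

theorem headXi_nondya (θ : ℝ) (hθ : θ ∈ HeadXi) (hd : ∀ (m : ℕ) (N : ℤ), 2 ^ m * θ ≠ N)
    (ε : ℝ) (hε : 0 < ε) : ∃ t ∈ HeadXi, t ∈ ThetaPer ∪ ThetaDya ∧
      0 < |t - θ| ∧ |t - θ| < ε := by
  obtain ⟨h0, h1, h⟩ := hθ
  obtain ⟨m, hm⟩ := exists_pow_lt_of_lt_one hε (by norm_num : (1/2 : ℝ) < 1)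
  set N : ℤ := ⌈(2:ℝ) ^ (m+1) * θ⌉ with hNdef
  have hc1 : (2:ℝ) ^ (m+1) * θ ≤ N := Int.le_ceil _
  have hc2 : (N:ℝ) < (2:ℝ) ^ (m+1) * θ + 1 := Int.ceil_lt_add_one _
  have hc3 : (2:ℝ) ^ (m+1) * θ < N := lt_of_le_of_ne hc1 (hd _ _)
  have hpp : (0:ℝ) < 2 ^ (m+1) := by positivity
  have hpm : (0:ℝ) < 2 ^ m := by positivity
  obtain ⟨t, ht⟩ : ∃ t : ℝ, 2 ^ (m+1) * t = N := ⟨N / 2 ^ (m+1), by field_simp⟩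
  have htθ : θ < t := by
    rw [← ht] at hc3
    exact lt_of_mul_lt_mul_left hc3 hpp.le
  have hNle : N ≤ 2 ^ m := by
    apply Int.ceil_le.mpr
    push_cast
    rw [pow_succ]; nlinarith
  have hNle' : (N:ℝ) ≤ 2 ^ m := by exact_mod_cast hNle
  have ht2 : t ≤ 1/2 := by
    rw [← ht, pow_succ] at hNle'
    by_contra hh
    push Not at hh
    nlinarith
  have ht0 : 0 < t := h0.trans htθ
  refine ⟨t, dya_mem _ (m+1) N ht0 ht2 ht ?_, Or.inr ⟨ht0, ht2, m+1, by omega, N, ht⟩, ?_, ?_⟩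
  · intro k hk
    obtain ⟨n, hn1, hn2⟩ := h k
    obtain ⟨d, hd'⟩ := Nat.exists_eq_add_of_le hk.le
    have hk1 : (1:ℝ) ≤ 2 ^ k := one_le_pow₀ (by norm_num)
    refine ⟨n, by nlinarith, ?_⟩
    have hpd : (0:ℝ) < 2 ^ d := by positivity
    have hN2 : N ≤ (n + 1) * 2 ^ d := by
      apply Int.ceil_le.mpr
      push_cast
      rw [hd', pow_add]; nlinarith
    have hN3 : (N:ℝ) ≤ (n + 1) * 2 ^ d := by exact_mod_cast hN2
    rw [← ht, hd', pow_add] at hN3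
    have : 2 ^ k * t ≤ (n:ℝ) + 1 := by
      apply le_of_mul_le_mul_right _ hpd
      linarith
    linarith
  · rw [abs_of_pos (by linarith)]; linarith
  · rw [abs_of_pos (by linarith)]
    have h3 : 2 ^ (m+1) * (t - θ) < 1 := by rw [mul_sub, ht]; linarith
    have h4 : (2:ℝ) ^ m * (1/2) ^ m = 1 := by rw [← mul_pow]; norm_num
    rw [pow_succ] at h3
    have : 2 ^ m * (t - θ) < (2:ℝ) ^ m * (1/2) ^ m := by nlinarith
    exact (lt_of_mul_lt_mul_left this hpm.le).trans hm

theorem headXi_dya (θ : ℝ) (hθ : θ ∈ HeadXi) (m : ℕ) (N : ℤ) (hN : 2 ^ m * θ = N)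
    (ε : ℝ) (hε : 0 < ε) : ∃ t ∈ HeadXi, t ∈ ThetaPer ∪ ThetaDya ∧
      0 < |t - θ| ∧ |t - θ| < ε := by
  obtain ⟨h0, h1, h⟩ := hθ
  obtain ⟨j, hj⟩ := exists_pow_lt_of_lt_one hε (by norm_num : (1/2 : ℝ) < 1)
  obtain ⟨p, hp⟩ : ∃ p, p = m + (m + (j + 1)) := ⟨_, rfl⟩
  have hm1 : (1:ℝ) ≤ 2 ^ m := one_le_pow₀ (by norm_num)
  have hj1 : (1:ℝ) ≤ 2 ^ j := one_le_pow₀ (by norm_num)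
  have hP : (2:ℝ) ^ p = 2 ^ m * (2 ^ m * (2 ^ j * 2)) := by rw [hp]; ring
  have hmm : (1:ℝ) ≤ 2 ^ m * 2 ^ m := by nlinarith
  have hP2 : (2:ℝ) ^ j * 2 ≤ 2 ^ p := by rw [hP]; nlinarith
  have hP3 : (2:ℝ) ^ m * 2 ^ m * 2 ≤ 2 ^ p := by rw [hP]; nlinarith
  have hq : (0:ℝ) < 2 ^ p - 1 := by linarith
  have hNpos : (1:ℝ) ≤ N := by
    have : (0:ℝ) < N := by rw [← hN]; positivity
    have : (0:ℤ) < N := by exact_mod_cast this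
    exact_mod_cast this
  obtain ⟨δ, hδ⟩ : ∃ δ : ℝ, (2 ^ p - 1) * δ = 1 - θ := ⟨(1 - θ) / (2 ^ p - 1), by field_simp⟩
  have hδ0 : 0 < δ := by
    by_contra hh
    push Not at hh
    nlinarith
  obtain ⟨t, ht⟩ : ∃ t, t = θ - δ := ⟨_, rfl⟩
  have hper : 2 ^ p * t - t = ((2 ^ (m + (j+1)) * N - 1 : ℤ) : ℝ) := by
    push_cast
    rw [← hN]
    have : (2:ℝ) ^ (m + (j+1)) * (2 ^ m * θ) = 2 ^ p * θ := by rw [hp]; ring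
    rw [this, ht]; linarith
  have ht0 : 0 < t := by
    have h2 : (1:ℝ) < 2 ^ p * θ := by
      have : (2:ℝ) ^ p * θ = 2 ^ m * (2 ^ j * 2) * N := by rw [hP, ← hN]; ring
      rw [this]
      have : (2:ℝ) ≤ 2 ^ m * (2 ^ j * 2) := by nlinarith
      nlinarith
    have h3 : (2 ^ p - 1) * t = 2 ^ p * θ - 1 := by rw [ht]; linarith
    by_contra hh
    push Not at hh
    nlinarith
  have ht1 : t ≤ 1/2 := by linarith
  have key : ∀ k : ℕ, ∃ n : ℤ, t ≤ 2 ^ k * t - n ∧ 2 ^ k * t - n ≤ 1 := by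
    intro k
    induction k using Nat.strong_induction_on with
    | _ k ih =>
    rcases le_or_gt p k with hk | hk
    · obtain ⟨d, rfl⟩ := Nat.exists_eq_add_of_le hk
      obtain ⟨n, hn⟩ := ih d (by omega)
      refine ⟨n + 2 ^ d * (2 ^ (m + (j+1)) * N - 1), ?_⟩
      have : (2:ℝ) ^ (p + d) * t - ((n + 2 ^ d * (2 ^ (m + (j+1)) * N - 1) : ℤ) : ℝ)
          = 2 ^ d * t - n := by
        rw [Int.cast_add, Int.cast_mul, ← hper]
        push_cast
        ring
      rw [this]
      exact hn
    · rcases Nat.eq_zero_or_pos k with rfl | hk0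
      · exact ⟨0, by simp, by simp; linarith⟩
      obtain ⟨n, hn1, hn2⟩ := h k
      have hkk : (1:ℝ) ≤ 2 ^ k := one_le_pow₀ (by norm_num)
      refine ⟨n, ?_, by rw [ht]; nlinarith⟩
      rcases le_or_gt m k with hmk | hmk
      · -- the shift of `θ` equals one
        obtain ⟨d, rfl⟩ := Nat.exists_eq_add_of_le hmk
        have e : (2:ℝ) ^ (m + d) * θ = ((2 ^ d * N : ℤ) : ℝ) := by
          push_cast; rw [← hN]; ring
        rw [e] at hn1 hn2
        have e1 : (n:ℝ) < ((2 ^ d * N : ℤ) : ℝ) := by linarith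
        have e2 : n < 2 ^ d * N := by exact_mod_cast e1
        have e3 : n + 1 ≤ 2 ^ d * N := e2
        have e4 : (n:ℝ) + 1 ≤ ((2 ^ d * N : ℤ) : ℝ) := by exact_mod_cast e3
        have e5 : (2:ℝ) ^ (m + d) * 2 ≤ 2 ^ p := by
          rw [← pow_succ]; exact pow_le_pow_right₀ (by norm_num) hk
        have e6 : (2:ℝ) ^ (m + d) * t - n = ((2 ^ d * N : ℤ) : ℝ) - n - 2 ^ (m+d) * δ := by
          rw [ht, mul_sub, e]; ring
        rw [e6, ht]
        nlinarith
      · have e : 2 ^ m * (2 ^ k * θ - n - θ) = ((2 ^ k * N - n * 2 ^ m - N : ℤ) : ℝ) := by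
          push_cast; rw [← hN]; ring
        have e0 : (0:ℝ) ≤ ((2 ^ k * N - n * 2 ^ m - N : ℤ) : ℝ) := by
          rw [← e]; apply mul_nonneg <;> linarith
        have e1 : 0 ≤ 2 ^ k * N - n * 2 ^ m - N := by exact_mod_cast e0
        have e2 : 2 ^ k * N - n * 2 ^ m - N ≠ 0 := by
          intro hz
          have hdvd : (2:ℤ) ^ m ∣ (2 ^ k - 1) * N := ⟨n, by linarith⟩
          have hcop : IsCoprime ((2:ℤ) ^ m) (2 ^ k - 1) := by
            apply IsCoprime.pow_left
            obtain ⟨l, rfl⟩ := Nat.exists_eq_add_of_le hk0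
            exact ⟨2 ^ l, -1, by ring⟩
          have hd2 := hcop.dvd_of_dvd_mul_left hdvd
          have hle := Int.le_of_dvd (by exact_mod_cast (by linarith : (0:ℝ) < N)) hd2
          have hle' : (2:ℝ) ^ m ≤ N := by exact_mod_cast hle
          rw [← hN] at hle'
          nlinarith
        have e3 : 1 ≤ 2 ^ k * N - n * 2 ^ m - N := by omega
        have e4 : (1:ℝ) ≤ ((2 ^ k * N - n * 2 ^ m - N : ℤ) : ℝ) := by exact_mod_cast e3
        rw [← e] at e4
        have e5 : (2:ℝ) ^ k ≤ 2 ^ m := pow_le_pow_right₀ (by norm_num) hmk.le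
        have e6 : 2 ^ m * (2 ^ k * δ) ≤ 1 := by
          have a1 : (2:ℝ) ^ m * 2 ^ k ≤ 2 ^ m * 2 ^ m := by nlinarith
          have a2 : (2:ℝ) ^ m * 2 ^ k ≤ 2 ^ p - 1 := by linarith
          have a3 : (2:ℝ) ^ m * 2 ^ k * δ ≤ (2 ^ p - 1) * δ :=
            mul_le_mul_of_nonneg_right a2 hδ0.le
          linarith
        have e7 : 2 ^ m * (2 ^ k * δ) ≤ 2 ^ m * (2 ^ k * θ - n - θ) := e6.trans e4
        have e8 := le_of_mul_le_mul_left e7 (by linarith)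
        rw [ht, mul_sub]
        linarith
  refine ⟨t, ⟨ht0, ht1, key⟩, Or.inl ⟨ht0, ht1, p, by omega, _, hper⟩, ?_, ?_⟩
  · rw [ht, abs_pos]; intro hh; linarith
  · have : t - θ = -δ := by rw [ht]; ring
    rw [this, abs_neg, abs_of_pos hδ0]
    have h4 : (2:ℝ) ^ j * (1/2) ^ j = 1 := by rw [← mul_pow]; norm_num
    have h5 : (2:ℝ) ^ j * δ ≤ (2 ^ p - 1) * δ :=
      mul_le_mul_of_nonneg_right (by linarith) hδ0.le
    have h6 : (2:ℝ) ^ j * δ < 2 ^ j * (1/2) ^ j := by linarith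
    exact (lt_of_mul_lt_mul_left h6 (by linarith)).trans hj

/-- Every point of `Ξ ∪ {0}` is an accumulation point of `(Ξ ∩ Θ_per) ∪ (Ξ ∩ Θ_dya)`. -/
theorem headXi_boundary_points_accumulate (θ : ℝ) (hθ : θ ∈ HeadXi ∪ {0}) :
    ∀ ε > 0, ∃ t ∈ HeadXi, t ∈ ThetaPer ∪ ThetaDya ∧
      0 < |t - θ| ∧ |t - θ| < ε := by
  intro ε hε
  rcases hθ with hθ | hθ
  · by_cases hd : ∃ (m : ℕ) (N : ℤ), 2 ^ m * θ = N
    · obtain ⟨m, N, hN⟩ := hd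
      exact headXi_dya θ hθ m N hN ε hε
    · push Not at hd
      exact headXi_nondya θ hθ hd ε hε
  · rw [Set.mem_singleton_iff] at hθ
    subst hθ
    exact headXi_zero ε hε
end

section
/- Let ℓ ≥ 2 and p ≥ ℓ be integers, and let α ∈ ℝ satisfy 0 < α < 1/2 − 1/(2·(2^ℓ − 1)). Then 1 − 1/(2^p − 1) ∈ C_α. (This holds because the smallest representative in (0, 1] of any point 2^k·(1 − 1/(2^p − 1)) mod ℤ, k ≥ 0, equals 1/2 − 1/(2(2^p − 1)), which is at least 1/2 − 1/(2(2^ℓ − 1)) > α.) -/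
/-- Every power of two is congruent mod `2^p - 1` to some `2^j` with `j < p`. -/
theorem pow_two_mod_mersenne (p : ℕ) (hp : 2 ≤ p) (k : ℕ) :
    ∃ (m : ℤ) (j : ℕ), j < p ∧ (2 : ℝ) ^ k = m * (2 ^ p - 1) + 2 ^ j := by
  induction k with
  | zero => exact ⟨0, 0, by omega, by simp⟩
  | succ k ih =>
    obtain ⟨m, j, hj, h⟩ := ih
    by_cases hj' : j + 1 < p
    · refine ⟨2 * m, j + 1, hj', ?_⟩
      rw [pow_succ, h]
      push_cast
      ring
    · have hjp : p = j + 1 := by omega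
      refine ⟨2 * m + 1, 0, by omega, ?_⟩
      rw [pow_succ, h, hjp]
      push_cast
      ring

/-- For integers `ℓ ≥ 2`, `p ≥ ℓ`, and `0 < α < 1/2 - 1/(2(2^ℓ - 1))`, the angle
`1 - 1/(2^p - 1)` belongs to `C_α`. -/
theorem one_sub_inv_mem_CSet (l p : ℕ) (hl : 2 ≤ l) (hp : l ≤ p) (α : ℝ)
    (hα0 : 0 < α) (hα : α < 1/2 - 1 / (2 * (2 ^ l - 1))) :
    (1 - 1 / (2 ^ p - 1) : ℝ) ∈ CSet α := by
  have h4 : (4 : ℝ) ≤ 2 ^ l := by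
    calc (4 : ℝ) = 2 ^ 2 := by norm_num
      _ ≤ 2 ^ l := pow_le_pow_right₀ (by norm_num) hl
  have hlp : (2 : ℝ) ^ l ≤ 2 ^ p := pow_le_pow_right₀ (by norm_num) hp
  have hD : (0 : ℝ) < 2 ^ p - 1 := by linarith
  have hinv : (1 : ℝ) / (2 ^ p - 1) < 1 := by
    rw [div_lt_one hD]
    linarith
  have hpos : (0 : ℝ) < 1 / (2 ^ p - 1) := by positivity
  refine ⟨by linarith, by linarith, fun k => ?_⟩
  obtain ⟨m, j, hj, h⟩ := pow_two_mod_mersenne p (by omega) k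
  have hval : (2 : ℝ) ^ k * (1 - 1 / (2 ^ p - 1)) - ((2 ^ k - 1 - m : ℤ) : ℝ)
      = 1 - 2 ^ j / (2 ^ p - 1) := by
    push_cast
    have h' : (2 : ℝ) ^ k / (2 ^ p - 1) = m + 2 ^ j / (2 ^ p - 1) := by
      rw [h, add_div, mul_div_assoc, div_self hD.ne', mul_one]
    have h'' : (2 : ℝ) ^ k * (1 - 1 / (2 ^ p - 1)) = 2 ^ k - 2 ^ k / (2 ^ p - 1) := by ring
    rw [h'', h']
    ring
  refine ⟨2 ^ k - 1 - m, ?_, ?_⟩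
  · rw [hval]
    have hj2 : (2 : ℝ) ^ j ≤ 2 ^ p / 2 := by
      have h1 : (2 : ℝ) ^ (j + 1) ≤ 2 ^ p := pow_le_pow_right₀ (by norm_num) hj
      rw [pow_succ] at h1
      linarith
    have h1 : (2 : ℝ) ^ j / (2 ^ p - 1) ≤ (2 ^ p / 2) / (2 ^ p - 1) := by gcongr
    have h2 : ((2 : ℝ) ^ p / 2) / (2 ^ p - 1) = 1 / 2 + 1 / (2 * (2 ^ p - 1)) := by
      have := hD.ne'
      field_simp
      ring
    have h3 : (1 : ℝ) / (2 * (2 ^ p - 1)) ≤ 1 / (2 * (2 ^ l - 1)) :=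
      one_div_le_one_div_of_le (by linarith) (by linarith)
    linarith
  · rw [hval]
    have : (0 : ℝ) ≤ 2 ^ j / (2 ^ p - 1) := by positivity
    linarith
end
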